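/- Let G and H be groups whose endomorphism monoids End(G) and End(H) are isomorphic as monoids (semigroups). If G is a Schmidt group with parameters p, q, v (a non-nilpotent finite group all of whose proper subgroups are nilpotent, with derived subgroup a p-group and cyclic Sylow q-subgroup of order q^v), then H is also a Schmidt group with the same parameters p, q, v. -/

import Mathlib

/-- `G` is a Schmidt group with parameters `p, q, v`: a finite non-nilpotent
group all of whose proper subgroups are nilpotent, whose derived subgroup is a
`p`-group, and which decomposes as `G = G' ⋊ C(q^v)`. -/
def IsSchmidtGroup (p q v : ℕ) (G : Type*) [Group G] : Prop :=
  Finite G ∧ ¬ Group.IsNilpotent G ∧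
    (∀ K : Subgroup G, K ≠ ⊤ → Group.IsNilpotent K) ∧
    IsPGroup p (commutator G) ∧
    ∃ b : G, orderOf b = q ^ v ∧
      commutator G ⊔ Subgroup.zpowers b = ⊤ ∧
      commutator G ⊓ Subgroup.zpowers b = ⊥

/-!
Let `e` be a retraction of the Schmidt group `G = G' ⋊ ⟨b⟩` onto `⟨b⟩`. Every non-invertible
endomorphism `f` of `G` satisfies `f * e = f`: its image is nilpotent, so `f b` commutes with
`f G'`, and the conjugates of `b` generate `G`. This property of `e` is multiplicative, hence it
holds for the idempotent `x` of `End H` corresponding to `e`. The monoid `End ⟨b⟩` knows the group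
`⟨b⟩`, so `x` is a retraction onto a cyclic group `⟨c⟩` of order `q ^ v`. Endomorphisms of `H` with
abelian image are not invertible, hence kill `ker x`; so `ker x` is the derived subgroup of `H`.
As `H / Z(H)` embeds in the finite monoid `End H`, the group `H` is finite by Schur's theorem.

The heart of the matter is that `Inn H` is the image of `Inn G`. Conjugation by `c` corresponds to
an endomorphism of `G` that fixes `b` and has order dividing `q`. The endomorphisms of `G` fixing
`b` act faithfully on `G' / C_{G'}(b)`, through the finite field generated by the irreducible
action of `b`; so they commute, and the one at hand is conjugation by a power of `b`. The normal
closure of `b` is `G`, which gives one inclusion. For the other, endomorphisms `f`, `f'` of `G` with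
`e * f = e` and `e * f' = e` commute up to `Inn G`, and the inner automorphisms of `H` correspond to
such `f`. Thus `G / Z(G) ≅ H / Z(H)`, and nilpotency of subgroups can be compared modulo the
centres.
-/

open Subgroup
open scoped commutatorElement Pointwise

section GroupTheory

variable {G : Type*} [Group G]

theorem commute_of_isPGroup [Finite G] [Group.IsNilpotent G] {p q : ℕ} (hp : p.Prime)
    (hq : q.Prime) (hpq : p ≠ q) {P Q : Subgroup G} (hP : IsPGroup p P) (hQ : IsPGroup q Q)
    {x y : G} (hx : x ∈ P) (hy : y ∈ Q) : Commute x y := by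
  have : Fact p.Prime := ⟨hp⟩
  have : Fact q.Prime := ⟨hq⟩
  obtain ⟨S, hS⟩ := hP.exists_le_sylow
  obtain ⟨T, hT⟩ := hQ.exists_le_sylow
  exact commute_of_normal_of_disjoint _ _ inferInstance inferInstance
    (IsPGroup.disjoint_of_ne p q hpq _ _ S.isPGroup' T.isPGroup') x y (hS hx) (hT hy)

theorem commute_of_isPGroup_of_mem {K : Subgroup G} [Finite K] [Group.IsNilpotent K] {p q : ℕ}
    (hp : p.Prime) (hq : q.Prime) (hpq : p ≠ q) {P Q : Subgroup G} (hP : IsPGroup p P)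
    (hQ : IsPGroup q Q) {x y : G} (hx : x ∈ P) (hxK : x ∈ K) (hy : y ∈ Q) (hyK : y ∈ K) :
    Commute x y :=
  congrArg Subtype.val <| commute_of_isPGroup (x := (⟨x, hxK⟩ : K)) (y := ⟨y, hyK⟩) hp hq hpq
    (hP.comap_of_injective K.subtype K.subtype_injective)
    (hQ.comap_of_injective K.subtype K.subtype_injective) hx hy

theorem commute_of_mem_zpowers {x y z : G} (hx : x ∈ zpowers z) (hy : y ∈ zpowers z) :
    Commute x y := by
  obtain ⟨i, rfl⟩ := mem_zpowers_iff.mp hx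
  obtain ⟨j, rfl⟩ := mem_zpowers_iff.mp hy
  exact Commute.zpow_zpow_self _ _ _

theorem mem_zpowers_mk (y : G) (z : zpowers y) : z ∈ zpowers (⟨y, mem_zpowers y⟩ : zpowers y) := by
  obtain ⟨_, k, rfl⟩ := z
  exact ⟨k, rfl⟩

theorem pow_eq_one_of_mem_zpowers {n : ℕ} {y z : G} (hz : z ∈ zpowers y) (hy : y ^ n = 1) :
    z ^ n = 1 :=
  orderOf_dvd_iff_pow_eq_one.mp
    ((orderOf_dvd_of_mem_zpowers hz).trans (orderOf_dvd_of_pow_eq_one hy))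

theorem isPGroup_zpowers {q n : ℕ} {y : G} (hy : y ^ q ^ n = 1) : IsPGroup q (zpowers y) :=
  fun z => ⟨n, Subtype.ext (pow_eq_one_of_mem_zpowers z.2 hy)⟩

theorem eq_one_of_mem_of_pow_eq_one {p q n : ℕ} (hp : p.Prime) (hq : q.Prime) (hpq : p ≠ q)
    {P : Subgroup G} (hP : IsPGroup p P) {x : G} (hx : x ∈ P) (hxq : x ^ q ^ n = 1) : x = 1 :=
  have : Fact p.Prime := ⟨hp⟩
  have : Fact q.Prime := ⟨hq⟩
  disjoint_def.mp (IsPGroup.disjoint_of_ne p q hpq P _ hP (isPGroup_zpowers hxq)) hx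
    (mem_zpowers x)

theorem mem_zpowers_or_mem_zpowers_pow {q v : ℕ} (hq : q.Prime) {c y : G}
    (hc : orderOf c = q ^ v) (hy : y ∈ zpowers c) : c ∈ zpowers y ∨ y ∈ zpowers (c ^ q) := by
  obtain ⟨k, rfl⟩ := mem_zpowers_iff.mp hy
  by_cases hqk : (q : ℤ) ∣ k
  · obtain ⟨m, rfl⟩ := hqk
    exact .inr ⟨m, by simp [zpow_mul]⟩
  · have hcop : IsCoprime (k : ℤ) (q ^ v : ℕ) := by
      rw [Nat.cast_pow]
      exact ((Nat.prime_iff_prime_int.mp hq).coprime_iff_not_dvd.mpr hqk).symm.pow_right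
    obtain ⟨m, n, hmn⟩ := hcop
    refine .inl ⟨m, ?_⟩
    calc (c ^ k) ^ m = c ^ (m * k + n * (q ^ v : ℕ)) := by
          rw [zpow_add, mul_comm n, zpow_mul c (q ^ v : ℕ), zpow_natCast, ← hc, pow_orderOf_eq_one,
            one_zpow, mul_one, mul_comm, zpow_mul]
      _ = c := by rw [hmn, zpow_one]

theorem mem_zpowers_or_mem_zpowers {q v : ℕ} (hq : q.Prime) {c y z : G} (hc : orderOf c = q ^ v)
    (hy : y ∈ zpowers c) (hz : z ∈ zpowers c) : y ∈ zpowers z ∨ z ∈ zpowers y := by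
  induction v generalizing c with
  | zero =>
    rw [orderOf_eq_one_iff.mp hc, zpowers_one_eq_bot, mem_bot] at hy
    exact .inl (hy ▸ one_mem _)
  | succ v ih =>
    rcases mem_zpowers_or_mem_zpowers_pow hq hc hy with hcy | hy'
    · exact .inr (zpowers_le.mpr hcy hz)
    rcases mem_zpowers_or_mem_zpowers_pow hq hc hz with hcz | hz'
    · exact .inl (zpowers_le.mpr hcz hy)
    refine ih ?_ hy' hz'
    rw [orderOf_pow_of_dvd hq.ne_zero (hc ▸ dvd_pow_self q v.succ_ne_zero), hc, pow_succ,
      Nat.mul_div_cancel _ hq.pos]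

theorem notMem_zpowers_pow {q : ℕ} (hq : q ≠ 1) {c : G} (hc : q ∣ orderOf c) :
    c ∉ zpowers (c ^ q) := by
  intro h
  obtain ⟨m, hm⟩ := mem_zpowers_iff.mp h
  have hdvd : (orderOf c : ℤ) ∣ q * m - 1 := by
    rw [orderOf_dvd_iff_zpow_eq_one, zpow_sub_one, zpow_mul, zpow_natCast, hm, mul_inv_cancel]
  have hq1 : (q : ℤ) ∣ 1 :=
    (dvd_sub_right (dvd_mul_right _ m)).mp ((Int.natCast_dvd_natCast.mpr hc).trans hdvd)
  exact hq (Nat.dvd_one.mp (by exact_mod_cast hq1))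

theorem commutator_le_ker_of_commute {K : Type*} [Group K] {f : G →* K}
    (hf : ∀ g k, Commute (f g) (f k)) : commutator G ≤ f.ker := by
  rw [commutator_eq_closure, closure_le]
  rintro _ ⟨g, k, rfl⟩
  exact (map_commutatorElement f g k).trans (commutatorElement_eq_one_iff_commute.mpr (hf g k))

end GroupTheory

section Endomorphisms

variable {G H : Type*} [Group G] [Group H]

theorem end_mul_apply (f f' : Monoid.End G) (g : G) : (f * f') g = f (f' g) := rfl

/-- The endomorphism with value `1` everywhere. It is the zero element of the monoid
`Monoid.End G`, whose `1` is the identity map. -/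
def trivialEnd (G : Type*) [Group G] : Monoid.End G := (1 : G →* G)

@[simp]
theorem trivialEnd_apply (g : G) : trivialEnd G g = 1 := rfl

theorem map_trivialEnd (Φ : Monoid.End G ≃* Monoid.End H) : Φ (trivialEnd G) = trivialEnd H := by
  have absorb_left : Φ (trivialEnd G) * trivialEnd H = trivialEnd H :=
    DFunLike.ext _ _ fun _ => map_one (Φ (trivialEnd G))
  have absorb_right : trivialEnd G * Φ.symm (trivialEnd H) = trivialEnd G := rfl
  rw [← absorb_left, ← absorb_right, map_mul, Φ.apply_symm_apply, mul_assoc]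
  rfl

theorem bijective_of_isUnit {f : Monoid.End G} (hf : IsUnit f) : Function.Bijective f := by
  obtain ⟨u, rfl⟩ := hf
  exact Function.bijective_iff_has_inverse.mpr ⟨(u⁻¹ : (Monoid.End G)ˣ).val,
    fun x => DFunLike.congr_fun u.inv_mul x, fun x => DFunLike.congr_fun u.mul_inv x⟩

theorem isUnit_of_bijective {f : Monoid.End G} (hf : Function.Bijective f) : IsUnit f :=
  let E := MulEquiv.ofBijective f hf
  ⟨⟨f, (E.symm : G →* G), DFunLike.ext _ _ E.apply_symm_apply,
    DFunLike.ext _ _ E.symm_apply_apply⟩, rfl⟩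

theorem range_ne_top_of_not_isUnit [Finite G] {f : Monoid.End G} (hf : ¬ IsUnit f) :
    MonoidHom.range (f : G →* G) ≠ ⊤ := fun htop =>
  hf <| isUnit_of_bijective <| Function.Surjective.bijective_of_finite <|
    MonoidHom.range_eq_top.mp htop

/-- Conjugation, as an endomorphism: `innerEnd G g x = g * x * g⁻¹`. -/
def innerEnd (G : Type*) [Group G] : G →* Monoid.End G where
  toFun g := ((MulAut.conj g : G ≃* G) : G →* G)
  map_one' := DFunLike.ext _ _ fun x => DFunLike.congr_fun (map_one (MulAut.conj (G := G))) x
  map_mul' g k := DFunLike.ext _ _ fun x => DFunLike.congr_fun (map_mul MulAut.conj g k) x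

@[simp]
theorem innerEnd_apply (g x : G) : innerEnd G g x = g * x * g⁻¹ := rfl

theorem innerEnd_eq_one_iff {g : G} : innerEnd G g = 1 ↔ g ∈ center G := by
  rw [mem_center_iff, DFunLike.ext_iff]
  exact forall_congr' fun x => by
    rw [innerEnd_apply, Monoid.End.coe_one, id, mul_inv_eq_iff_eq_mul, eq_comm]

theorem mul_innerEnd (f : Monoid.End G) (g : G) : f * innerEnd G g = innerEnd G (f g) * f :=
  DFunLike.ext _ _ fun x => by simp

/-- Conjugation, as a homomorphism to the unit group of the endomorphism monoid; its range is the
group of inner automorphisms. -/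
def innerUnits (G : Type*) [Group G] : G →* (Monoid.End G)ˣ := (innerEnd G).toHomUnits

@[simp]
theorem coe_innerUnits (g : G) : (innerUnits G g : Monoid.End G) = innerEnd G g := rfl

theorem ker_innerUnits (G : Type*) [Group G] : (innerUnits G).ker = center G := by
  ext g
  rw [MonoidHom.mem_ker, ← Units.val_inj, coe_innerUnits, Units.val_one, innerEnd_eq_one_iff]

theorem finiteIndex_center (G : Type*) [Group G] [Finite (Monoid.End G)] :
    (center G).FiniteIndex := by
  rw [← ker_innerUnits]
  infer_instance

instance normal_range_innerUnits : (innerUnits G).range.Normal := by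
  refine ⟨?_⟩
  rintro _ ⟨g, rfl⟩ u
  refine ⟨(u : Monoid.End G) g, ?_⟩
  rw [eq_mul_inv_iff_mul_eq]
  exact Units.ext (mul_innerEnd _ _).symm

end Endomorphisms

/-- `x` is a retraction of the group onto its cyclic subgroup generated by `c`. -/
structure IsCyclicRetraction {G : Type*} [Group G] (x : Monoid.End G) (c : G) : Prop where
  map_gen : x c = c
  map_mem : ∀ g, x g ∈ zpowers c

namespace IsCyclicRetraction

variable {G : Type*} [Group G] {x : Monoid.End G} {c : G}

theorem map_of_mem_zpowers (hx : IsCyclicRetraction x c) {y : G} (hy : y ∈ zpowers c) :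
    x y = y := by
  obtain ⟨k, rfl⟩ := mem_zpowers_iff.mp hy
  rw [map_zpow, hx.map_gen]

theorem map_map (hx : IsCyclicRetraction x c) (g : G) : x (x g) = x g :=
  hx.map_of_mem_zpowers (hx.map_mem g)

theorem isIdempotentElem (hx : IsCyclicRetraction x c) : IsIdempotentElem x :=
  DFunLike.ext _ _ hx.map_map

theorem map_mul_inv_map (hx : IsCyclicRetraction x c) (g : G) : x (g * (x g)⁻¹) = 1 := by
  rw [map_mul, map_inv, hx.map_map, mul_inv_cancel]

theorem range_eq (hx : IsCyclicRetraction x c) : MonoidHom.range (x : G →* G) = zpowers c := by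
  refine le_antisymm ?_ (zpowers_le.mpr ⟨c, hx.map_gen⟩)
  rintro _ ⟨g, rfl⟩
  exact hx.map_mem g

theorem commute_map (hx : IsCyclicRetraction x c) (g k : G) : Commute (x g) (x k) :=
  commute_of_mem_zpowers (hx.map_mem g) (hx.map_mem k)

theorem commutator_le_ker (hx : IsCyclicRetraction x c) :
    commutator G ≤ MonoidHom.ker (x : G →* G) :=
  commutator_le_ker_of_commute hx.commute_map

theorem mul_innerEnd (hx : IsCyclicRetraction x c) (g : G) : x * innerEnd G g = x :=
  DFunLike.ext _ _ fun k => by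
    rw [end_mul_apply, innerEnd_apply, map_mul, map_mul, (hx.commute_map g k).eq, map_inv,
      mul_inv_cancel_right]

theorem ker_sup_zpowers (hx : IsCyclicRetraction x c) :
    MonoidHom.ker (x : G →* G) ⊔ zpowers c = ⊤ :=
  eq_top_iff.mpr fun g _ => by
    have := mul_mem_sup (S := MonoidHom.ker (x : G →* G)) (hx.map_mul_inv_map g) (hx.map_mem g)
    rwa [inv_mul_cancel_right] at this

theorem ker_inf_zpowers (hx : IsCyclicRetraction x c) :
    MonoidHom.ker (x : G →* G) ⊓ zpowers c = ⊥ :=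
  eq_bot_iff.mpr fun _ hy => (hx.map_of_mem_zpowers hy.2).symm.trans hy.1

theorem map_mem_zpowers_map_gen (hx : IsCyclicRetraction x c) {f : Monoid.End G} (hf : f * x = f)
    (g : G) : f g ∈ zpowers (f c) := by
  obtain ⟨k, hk⟩ := mem_zpowers_iff.mp (hx.map_mem g)
  exact ⟨k, by rw [← hf, end_mul_apply, end_mul_apply, hx.map_gen, ← hk, map_zpow]⟩

theorem end_ext (hx : IsCyclicRetraction x c) {f f' : Monoid.End G} (hf : f * x = f)
    (hf' : f' * x = f') (hc : f c = f' c) : f = f' := by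
  refine DFunLike.ext _ _ fun g => ?_
  obtain ⟨k, hk⟩ := mem_zpowers_iff.mp (hx.map_mem g)
  rw [← hf, ← hf', end_mul_apply, end_mul_apply, ← hk, map_zpow, map_zpow, hc]

theorem innerEnd_mul (hx : IsCyclicRetraction x c) : innerEnd G c * x = x :=
  hx.end_ext (by rw [mul_assoc, hx.isIdempotentElem.eq]) hx.isIdempotentElem
    (by simp [hx.map_gen])

theorem exists_end_map_gen (hx : IsCyclicRetraction x c) {d : G} (hd : orderOf d ∣ orderOf c) :
    ∃ f : Monoid.End G, f * x = f ∧ f c = d := by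
  have hd' : orderOf d ∣ orderOf (⟨c, mem_zpowers c⟩ : zpowers c) := by rwa [orderOf_mk]
  let θ : zpowers c →* G := monoidHomOfForallMemZpowers (mem_zpowers_mk c) hd'
  refine ⟨θ.comp ((x : G →* G).codRestrict (zpowers c) hx.map_mem), ?_, ?_⟩
  · exact DFunLike.ext _ _ fun g => congrArg θ (Subtype.ext (hx.map_map g))
  · exact (congrArg θ (Subtype.ext hx.map_gen)).trans (monoidHomOfForallMemZpowers_apply_gen _ _)

theorem exists_of_isCyclic_range (hx : IsIdempotentElem x)
    [hcyc : IsCyclic (MonoidHom.range (x : G →* G))] :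
    ∃ c, IsCyclicRetraction x c ∧ orderOf c = Nat.card (MonoidHom.range (x : G →* G)) := by
  obtain ⟨c, hc⟩ := (Subgroup.isCyclic_iff_exists_zpowers_eq_top _).mp hcyc
  obtain ⟨g, hg⟩ : c ∈ MonoidHom.range (x : G →* G) := hc ▸ mem_zpowers c
  refine ⟨c, ⟨?_, fun g => hc ▸ ⟨g, rfl⟩⟩, by rw [← hc, Nat.card_zpowers]⟩
  rw [← hg]
  exact DFunLike.congr_fun hx g

end IsCyclicRetraction

section Characters

theorem exists_hom_of_orderOf_eq {K L T : Type*} [Group K] [Group L] [Group T] (χ : K →* T)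
    {k₀ : K} {y : L} (hk : ∀ k, χ k ∈ zpowers (χ k₀)) (hy : orderOf y = orderOf (χ k₀)) :
    ∃ f : K →* L, f k₀ = y ∧ (∀ k, f k ∈ zpowers y) ∧ ∀ k, f k = 1 → χ k = 1 := by
  let E : zpowers (χ k₀) ≃* zpowers y :=
    mulEquivOfOrderOfEq (mem_zpowers_mk (χ k₀)) (mem_zpowers_mk y) (by simp only [orderOf_mk, hy])
  refine ⟨((zpowers y).subtype.comp E.toMonoidHom).comp (χ.codRestrict _ hk),
    congrArg Subtype.val (mulEquivOfOrderOfEq_apply_gen _ _ _), fun k => (E ⟨χ k, hk k⟩).2,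
    fun k h => ?_⟩
  exact congrArg Subtype.val (E.map_eq_one_iff.mp (Subtype.ext h))

theorem mem_zmultiples_of_nsmul_eq_zero {n : ℕ} (hn : 0 < n) {t : AddCircle (1 : ℚ)}
    (ht : n • t = 0) : t ∈ AddSubgroup.zmultiples ((1 / n : ℚ) : AddCircle (1 : ℚ)) := by
  obtain ⟨m, -, rfl⟩ := (AddCircle.nsmul_eq_zero_iff hn).mp ht
  refine ⟨m, ?_⟩
  simp only [natCast_zsmul, ← AddCircle.coe_nsmul]
  congr 1
  simp [div_eq_mul_inv]

theorem map_mem_zpowers_of_pow_eq_one {K : Type*} [Group K] {n : ℕ} (hn : 0 < n)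
    (hK : ∀ k : K, k ^ n = 1) (χ : K →* Multiplicative (AddCircle (1 : ℚ))) (k : K) :
    χ k ∈ zpowers (Multiplicative.ofAdd ((1 / n : ℚ) : AddCircle (1 : ℚ))) := by
  have hχ : n • (χ k).toAdd = 0 := by rw [← toAdd_pow, ← map_pow, hK, map_one, toAdd_one]
  obtain ⟨m, hm⟩ := AddSubgroup.mem_zmultiples_iff.mp (mem_zmultiples_of_nsmul_eq_zero hn hχ)
  exact ⟨m, Multiplicative.toAdd.injective hm⟩

theorem exists_forall_map_mem_zpowers {K : Type*} [Group K] {n : ℕ} (hn : 0 < n)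
    (hK : ∀ k : K, k ^ n = 1) (χ : K →* Multiplicative (AddCircle (1 : ℚ))) :
    ∃ k₀, ∀ k, χ k ∈ zpowers (χ k₀) := by
  have hle : χ.range ≤ zpowers (Multiplicative.ofAdd ((1 / n : ℚ) : AddCircle (1 : ℚ))) := by
    rintro _ ⟨k, rfl⟩
    exact map_mem_zpowers_of_pow_eq_one hn hK χ k
  have : IsCyclic χ.range := isCyclic_of_injective (inclusion hle) (inclusion_injective hle)
  obtain ⟨_, htop⟩ := (Subgroup.isCyclic_iff_exists_zpowers_eq_top _).mp this
  obtain ⟨k₀, rfl⟩ : _ ∈ χ.range := htop ▸ mem_zpowers _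
  exact ⟨k₀, fun k => htop ▸ ⟨k, rfl⟩⟩

-- `ℚ/ℤ` is injective, so an embedding of `⟨a⟩` into `ℚ/ℤ` extends to the whole group; as `a` has
-- maximal order, the extension still takes its values in the image of `⟨a⟩`.
theorem exists_isCyclicRetraction_of_orderOf_eq_exponent {K : Type*} [CommGroup K]
    (hK : Monoid.ExponentExists K) {a : K} (ha : orderOf a = Monoid.exponent K) :
    ∃ r, IsCyclicRetraction r a := by
  have hpos : 0 < orderOf a := ha ▸ Monoid.exponent_pos.mpr hK
  let t : Multiplicative (AddCircle (1 : ℚ)) :=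
    Multiplicative.ofAdd ((1 / orderOf a : ℚ) : AddCircle (1 : ℚ))
  have ht : orderOf t = orderOf a :=
    (orderOf_ofAdd_eq_addOrderOf _).trans (AddCircle.addOrderOf_period_div (p := (1 : ℚ)) hpos)
  have hdvd : orderOf t ∣ orderOf (⟨a, mem_zpowers a⟩ : zpowers a) := by rw [ht, orderOf_mk]
  let ψ : zpowers a →* Multiplicative (AddCircle (1 : ℚ)) :=
    monoidHomOfForallMemZpowers (mem_zpowers_mk a) hdvd
  obtain ⟨χ', hχ'⟩ := (Module.Baer.of_divisible (AddCircle (1 : ℚ))).extension_property_addMonoidHom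
    (MonoidHom.toAdditive (zpowers a).subtype) Subtype.val_injective
    (AddMonoidHom.toMultiplicativeRight.symm ψ)
  let χ : K →* Multiplicative (AddCircle (1 : ℚ)) := AddMonoidHom.toMultiplicativeRight χ'
  have hχa : χ a = t :=
    (DFunLike.congr_fun hχ' (Additive.ofMul ⟨a, mem_zpowers a⟩)).trans
      (monoidHomOfForallMemZpowers_apply_gen (mem_zpowers_mk a) hdvd)
  have hχ : ∀ k, χ k ∈ zpowers (χ a) := fun k => hχa ▸ map_mem_zpowers_of_pow_eq_one hpos
    (fun k => by rw [ha, Monoid.pow_exponent_eq_one]) χ k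
  obtain ⟨r, hra, hr, -⟩ := exists_hom_of_orderOf_eq χ hχ (hχa ▸ ht.symm)
  exact ⟨r, hra, hr⟩

theorem exists_end_commute_ne_one {K : Type*} [Group K] {n : ℕ} (hn : 0 < n)
    (hK : ∀ k : K, k ^ n = 1) {u : K} (hu : u ∉ commutator K) :
    ∃ f : Monoid.End K, f u ≠ 1 ∧ ∀ k l, Commute (f k) (f l) := by
  have hu' : Additive.ofMul (Abelianization.of u) ≠ 0 := fun h => hu <| by
    rw [← Abelianization.ker_of]
    exact h
  obtain ⟨χ, hχ⟩ := CharacterModule.exists_character_apply_ne_zero_of_ne_zero hu'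
  let ψ : K →* Multiplicative (AddCircle (1 : ℚ)) :=
    (AddMonoidHom.toMultiplicativeRight χ).comp Abelianization.of
  obtain ⟨k₀, hk₀⟩ := exists_forall_map_mem_zpowers hn hK ψ
  have hk₀_ne : orderOf k₀ ≠ 0 := (orderOf_pos_iff.mpr
    (isOfFinOrder_iff_pow_eq_one.mpr ⟨n, hn, hK k₀⟩)).ne'
  obtain ⟨f, -, hf, hker⟩ := exists_hom_of_orderOf_eq ψ hk₀
    (orderOf_pow_orderOf_div hk₀_ne (orderOf_map_dvd ψ k₀))
  exact ⟨f, fun h => hχ (hker u h), fun k l => commute_of_mem_zpowers (hf k) (hf l)⟩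

end Characters

section CyclicEndomorphisms

theorem card_end_of_isCyclic (C : Type*) [Group C] [IsCyclic C] :
    Nat.card (Monoid.End C) = Nat.card C := by
  obtain ⟨c, hc⟩ := IsCyclic.exists_generator (α := C)
  refine Nat.card_congr (Equiv.ofBijective (fun f : Monoid.End C => f c)
    ⟨fun f f' h => (MonoidHom.eq_iff_eq_on_generator hc f f').mpr h, fun y => ?_⟩)
  have hdvd : orderOf y ∣ orderOf c := orderOf_dvd_of_mem_zpowers (hc y)
  exact ⟨(monoidHomOfForallMemZpowers hc hdvd : C →* C),
    monoidHomOfForallMemZpowers_apply_gen hc hdvd⟩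

theorem end_commute_of_isCyclic {C : Type*} [Group C] [IsCyclic C] (f f' : Monoid.End C) :
    Commute f f' := by
  obtain ⟨i, hi⟩ := MonoidHom.map_cyclic f
  obtain ⟨j, hj⟩ := MonoidHom.map_cyclic f'
  have hf : ∀ y, f y = y ^ i := hi
  have hf' : ∀ y, f' y = y ^ j := hj
  exact DFunLike.ext _ _ fun y => by
    rw [end_mul_apply, end_mul_apply, hf, hf', hf', hf, ← zpow_mul, ← zpow_mul, mul_comm]

theorem exists_eq_end_mul_of_isCyclic {C : Type*} [Group C] [IsCyclic C] {q v : ℕ} (hq : q.Prime)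
    (hC : Nat.card C = q ^ v) (f f' : Monoid.End C) : ∃ t, f = t * f' ∨ f' = t * f := by
  obtain ⟨c, hc⟩ := IsCyclic.exists_generator (α := C)
  let := IsCyclic.commGroup (α := C)
  have factors : ∀ {f f' : Monoid.End C}, f c ∈ zpowers (f' c) → ∃ t, f = t * f' := by
    intro f f' h
    obtain ⟨m, hm⟩ := mem_zpowers_iff.mp h
    exact ⟨(zpowGroupHom m : C →* C), (MonoidHom.eq_iff_eq_on_generator hc f _).mpr hm.symm⟩
  rcases mem_zpowers_or_mem_zpowers hq ((orderOf_eq_card_of_forall_mem_zpowers hc).trans hC)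
    (hc (f c)) (hc (f' c)) with h | h
  · exact (factors h).imp fun _ => .inl
  · exact (factors h).imp fun _ => .inr

theorem exists_end_eq_commutatorElement {K : Type*} [Group K] (hK : ∀ x y : K, ⁅x, y⁆ ∈ center K)
    (z : K) : ∃ f : Monoid.End K, ∀ x, f x = ⁅x, z⁆ := by
  refine ⟨MonoidHom.mk' (fun x => ⁅x, z⁆) fun x y => ?_, fun _ => rfl⟩
  calc ⁅x * y, z⁆ = x * ⁅y, z⁆ * (z * x⁻¹ * z⁻¹) := by
        simp only [commutatorElement_def]; group
    _ = ⁅y, z⁆ * ⁅x, z⁆ := by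
        rw [mem_center_iff.mp (hK y z) x]; simp only [commutatorElement_def]; group
    _ = ⁅x, z⁆ * ⁅y, z⁆ := (mem_center_iff.mp (hK y z) _).symm

-- The inner automorphisms commute, so commutators are central and `⁅·, z⁆` is an endomorphism.
theorem mul_comm_of_end_chain {K : Type*} [Group K] (hcomm : ∀ f f' : Monoid.End K, Commute f f')
    (hchain : ∀ f f' : Monoid.End K, ∃ t, f = t * f' ∨ f' = t * f) (a b : K) :
    a * b = b * a := by
  have hcenter : ∀ x y : K, ⁅x, y⁆ ∈ center K := fun x y => by
    rw [← ker_innerUnits, MonoidHom.mem_ker, map_commutatorElement,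
      commutatorElement_eq_one_iff_commute]
    exact Units.ext (hcomm _ _)
  obtain ⟨f, hf⟩ := exists_end_eq_commutatorElement hcenter a
  obtain ⟨f', hf'⟩ := exists_end_eq_commutatorElement hcenter b
  rw [← commutatorElement_eq_one_iff_mul_comm]
  obtain ⟨t, rfl | rfl⟩ := hchain f f'
  · rw [← inv_eq_one, commutatorElement_inv, ← hf, end_mul_apply, hf', commutatorElement_self,
      map_one]
  · rw [← hf', end_mul_apply, hf, commutatorElement_self, map_one]

theorem exponentExists_of_finite_end (K : Type*) [CommGroup K] [Finite (Monoid.End K)] :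
    Monoid.ExponentExists K := by
  obtain ⟨m, n, hmn, h⟩ := Finite.exists_ne_map_eq_of_infinite
    (β := Monoid.End K) (fun n : ℕ => (powMonoidHom n : K →* K))
  wlog hlt : m < n generalizing m n
  · exact this n m hmn.symm h.symm (lt_of_le_of_ne (not_lt.mp hlt) hmn.symm)
  refine ⟨n - m, Nat.sub_pos_of_lt hlt, fun x => ?_⟩
  have hx : x ^ m = x ^ n := DFunLike.congr_fun h x
  rw [pow_sub _ hlt.le, hx, mul_inv_cancel]

-- Compare a retraction `r` onto an element of maximal order with the complementary projection
-- `x ↦ x / r x`: one of the two factors through the other only if one of them is trivial.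
theorem isCyclic_of_end_chain {K : Type*} [CommGroup K] [Finite (Monoid.End K)]
    (hchain : ∀ f f' : Monoid.End K, ∃ t, f = t * f' ∨ f' = t * f) : IsCyclic K := by
  have hexp := exponentExists_of_finite_end K
  obtain ⟨a, ha⟩ := Monoid.exists_orderOf_eq_exponent hexp
  obtain ⟨r, hr⟩ := exists_isCyclicRetraction_of_orderOf_eq_exponent hexp ha
  let s : Monoid.End K := MonoidHom.id K / (show K →* K from r)
  have hs : ∀ k, s k = k / r k := fun _ => rfl
  obtain ⟨t, ht | ht⟩ := hchain r s
  · have ha_one : a = 1 := by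
      rw [← hr.map_gen, ht, end_mul_apply, hs, hr.map_gen, div_self', map_one]
    have : Subsingleton K := Monoid.exp_eq_one_iff.mp (by rw [← ha, ha_one, orderOf_one])
    infer_instance
  · have hrs : ∀ k, r (s k) = 1 := fun k => by rw [hs, map_div, hr.map_map, div_self']
    have hss : ∀ k, s (s k) = s k := fun k => by rw [hs (s k), hrs, div_one]
    refine ⟨a, fun k => ?_⟩
    have hk : k / r k = 1 := by rw [← hs, ← hss, ht, end_mul_apply, ← ht, hrs, map_one]
    exact div_eq_one.mp hk ▸ hr.map_mem k

theorem isCyclic_of_end_equiv {C K : Type*} [Group C] [Group K] [IsCyclic C] {q v : ℕ}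
    (hq : q.Prime) (hC : Nat.card C = q ^ v) (Ψ : Monoid.End K ≃* Monoid.End C) :
    IsCyclic K ∧ Nat.card K = q ^ v := by
  have hcomm : ∀ f f' : Monoid.End K, Commute f f' := fun f f' =>
    Ψ.injective (by rw [map_mul, map_mul, (end_commute_of_isCyclic _ _).eq])
  have hchain : ∀ f f' : Monoid.End K, ∃ t, f = t * f' ∨ f' = t * f := fun f f' => by
    obtain ⟨t, ht⟩ := exists_eq_end_mul_of_isCyclic hq hC (Ψ f) (Ψ f')
    exact ⟨Ψ.symm t, by simpa only [← Ψ.injective.eq_iff, map_mul, Ψ.apply_symm_apply] using ht⟩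
  have hcard : Nat.card (Monoid.End K) = q ^ v := by
    rw [Nat.card_congr Ψ.toEquiv, card_end_of_isCyclic, hC]
  have : Finite (Monoid.End K) := Nat.finite_of_card_ne_zero (hcard ▸ pow_ne_zero v hq.ne_zero)
  let : CommGroup K :=
    { (inferInstance : Group K) with mul_comm := mul_comm_of_end_chain hcomm hchain }
  have : IsCyclic K := isCyclic_of_end_chain hchain
  exact ⟨this, (card_end_of_isCyclic K).symm.trans hcard⟩

end CyclicEndomorphisms

section Corner

variable {G H : Type*} [Group G] [Group H]

theorem apply_coe_range {x : Monoid.End G} (hx : IsIdempotentElem x)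
    (y : MonoidHom.range (x : G →* G)) : x y = y := by
  obtain ⟨_, z, rfl⟩ := y
  exact DFunLike.congr_fun hx z

/-- For an idempotent endomorphism `x`, the monoid of endomorphisms of the range of `x` is the
corner `x * Monoid.End G * x`. -/
def endRangeEquivCorner {x : Monoid.End G} (hx : IsIdempotentElem x) :
    Monoid.End (MonoidHom.range (x : G →* G)) ≃* Subsemigroup.corner x where
  toFun f := ⟨((MonoidHom.range x).subtype.comp f).comp (MonoidHom.rangeRestrict x),
    (Subsemigroup.mem_corner_iff hx).mpr
      ⟨DFunLike.ext _ _ fun _ => apply_coe_range hx _, DFunLike.ext _ _ fun g =>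
        congrArg (fun y => (f y : G)) (Subtype.ext (DFunLike.congr_fun hx g))⟩⟩
  invFun F := ((MonoidHom.rangeRestrict x).comp F.1).comp (MonoidHom.range x).subtype
  left_inv f := DFunLike.ext _ _ fun y => Subtype.ext <| by
    refine (apply_coe_range hx _).trans (congrArg (fun y => (f y : G)) ?_)
    exact Subtype.ext (apply_coe_range hx y)
  right_inv := by
    rintro ⟨F, hF⟩
    obtain ⟨hxF, hFx⟩ := (Subsemigroup.mem_corner_iff hx).mp hF
    refine Subtype.ext (Eq.trans ?_ hxF)
    exact congrArg (x * ·) hFx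
  map_mul' f f' := Subtype.ext <| DFunLike.ext _ _ fun g => congrArg (fun y => (f y : G)) <|
    Subtype.ext (apply_coe_range hx (f' (MonoidHom.rangeRestrict x g))).symm

/-- For an idempotent `e`, an isomorphism of endomorphism monoids induces one between those of the
ranges of `Φ e` and `e`. -/
def endRangeEquiv (Φ : Monoid.End G ≃* Monoid.End H) {e : Monoid.End G} (he : IsIdempotentElem e) :
    Monoid.End (MonoidHom.range (Φ e : H →* H)) ≃* Monoid.End (MonoidHom.range (e : G →* G)) :=
  have hcorner : (Subsemigroup.corner e).map (Φ : Monoid.End G →ₙ* Monoid.End H) =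
      Subsemigroup.corner (Φ e) := by
    ext F
    rw [Subsemigroup.mem_map_equiv, Subsemigroup.mem_corner_iff he,
      Subsemigroup.mem_corner_iff (he.map Φ), ← Φ.injective.eq_iff, ← Φ.injective.eq_iff, map_mul,
      map_mul, Φ.apply_symm_apply]
  (endRangeEquivCorner (he.map Φ)).trans <|
    ((Φ.subsemigroupMap _).trans (MulEquiv.subsemigroupCongr hcorner)).symm.trans
      (endRangeEquivCorner he).symm

end Corner

section IrreducibleEndomorphisms

/-- The only subgroups of `V` stable under the endomorphism `β` are the two trivial ones, i.e. `V`
is zero or a simple `ℤ[β]`-module. -/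
def ActsIrreducibly {V : Type*} [AddCommGroup V] (β : AddMonoid.End V) : Prop :=
  ∀ W : AddSubgroup V, (∀ w ∈ W, β w ∈ W) → W = ⊥ ∨ W = ⊤

namespace ActsIrreducibly

variable {V : Type*} [AddCommGroup V] {β : AddMonoid.End V}

theorem eq_zero_of_apply_eq_zero (hβ : ActsIrreducibly β) {γ : AddMonoid.End V}
    (hγ : Commute γ β) {w : V} (hw : w ≠ 0) (hγw : γ w = 0) : γ = 0 := by
  have hstable : ∀ u ∈ AddMonoidHom.ker γ, β u ∈ AddMonoidHom.ker γ := fun u hu =>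
    calc γ (β u) = β (γ u) := DFunLike.congr_fun hγ.eq u
      _ = β 0 := congrArg β hu
      _ = 0 := map_zero β
  rcases hβ (AddMonoidHom.ker γ) hstable with hker | hker
  · have : w ∈ AddMonoidHom.ker γ := hγw
    exact absurd (by simpa [hker] using this) hw
  · exact AddMonoidHom.ker_eq_top_iff.mp hker

theorem commute_of_mem_closure {γ : AddMonoid.End V} (hγ : γ ∈ Subring.closure {β}) :
    Commute γ β := by
  have hle : Subring.closure {β} ≤ Subring.centralizer {β} := by
    rw [Subring.closure_le, Set.singleton_subset_iff, SetLike.mem_coe, Subring.mem_centralizer_iff]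
    simp
  exact (Subring.mem_centralizer_iff.mp (hle hγ) β rfl).symm

theorem mem_closure_of_commute (hβ : ActsIrreducibly β) {α : AddMonoid.End V}
    (hα : Commute α β) : α ∈ Subring.closure {β} := by
  rcases subsingleton_or_nontrivial V with _ | _
  · convert zero_mem (Subring.closure {β})
    exact DFunLike.ext _ _ fun _ => Subsingleton.elim _ _
  obtain ⟨w, hw⟩ := exists_ne (0 : V)
  let orbit : AddSubgroup V := (Subring.closure {β}).toAddSubgroup.map
    ((smulAddHom (AddMonoid.End V) V).flip w)
  have hstable : ∀ u ∈ orbit, β u ∈ orbit := by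
    rintro _ ⟨s, hs, rfl⟩
    exact ⟨β * s, (Subring.closure {β}).mul_mem (Subring.subset_closure rfl) hs, rfl⟩
  have hw_mem : w ∈ orbit := ⟨1, one_mem (Subring.closure {β}), rfl⟩
  have htop : orbit = ⊤ := (hβ orbit hstable).resolve_left fun hbot => hw (by
    rwa [hbot, AddSubgroup.mem_bot] at hw_mem)
  obtain ⟨s, hs, hsw⟩ : α w ∈ orbit := htop ▸ AddSubgroup.mem_top _
  have hzero : α - s = 0 := hβ.eq_zero_of_apply_eq_zero
    (hα.sub_left (commute_of_mem_closure hs)) hw (sub_eq_zero.mpr hsw.symm)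
  rwa [sub_eq_zero.mp hzero]

theorem commute (hβ : ActsIrreducibly β) {α γ : AddMonoid.End V} (hα : Commute α β)
    (hγ : Commute γ β) : Commute α γ := by
  have hle : Subring.closure {β} ≤ Subring.centralizer {γ} := by
    rw [Subring.closure_le, Set.singleton_subset_iff, SetLike.mem_coe, Subring.mem_centralizer_iff]
    simpa using hγ.eq
  exact (Subring.mem_centralizer_iff.mp (hle (hβ.mem_closure_of_commute hα)) γ rfl).symm

open scoped IsMulCommutative in
-- The commutative ring `ℤ[β]` is a domain, so all its `q`-th roots of unity are powers of `β`.
theorem exists_eq_pow (hβ : ActsIrreducibly β) {q : ℕ} (hq : q.Prime)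
    (hβq : β ^ q = 1) (hβ_ne : β ≠ 1) {α : AddMonoid.End V} (hα : Commute α β) (hαq : α ^ q = 1) :
    ∃ i, α = β ^ i := by
  have : Fact q.Prime := ⟨hq⟩
  have : NeZero q := ⟨hq.ne_zero⟩
  have : IsMulCommutative (Subring.closure {β}) := Subring.isMulCommutative_closure
    fun _ hx _ hy => by rw [Set.mem_singleton_iff.mp hx, Set.mem_singleton_iff.mp hy]
  let ζ : Subring.closure {β} := ⟨β, Subring.subset_closure rfl⟩
  have hζ_ne : ζ ≠ 1 := fun h => hβ_ne (congrArg Subtype.val h)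
  have : NoZeroDivisors (Subring.closure {β}) := by
    refine ⟨fun {x y} hxy => or_iff_not_imp_right.mpr fun hy => ?_⟩
    obtain ⟨w, hw⟩ : ∃ w, y.1 w ≠ 0 := by
      by_contra! h
      exact hy (Subtype.ext (DFunLike.ext _ _ h))
    exact Subtype.ext (hβ.eq_zero_of_apply_eq_zero (commute_of_mem_closure x.2) hw
      (DFunLike.congr_fun (congrArg Subtype.val hxy) w))
  have : Nontrivial (Subring.closure {β}) := ⟨ζ, 1, hζ_ne⟩
  have : IsDomain (Subring.closure {β}) := NoZeroDivisors.to_isDomain _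
  have hζ : IsPrimitiveRoot ζ q :=
    orderOf_eq_prime (x := ζ) (Subtype.ext hβq) hζ_ne ▸ IsPrimitiveRoot.orderOf ζ
  obtain ⟨i, -, hi⟩ := hζ.eq_pow_of_pow_eq_one (ξ := ⟨α, hβ.mem_closure_of_commute hα⟩)
    (Subtype.ext hαq)
  exact ⟨i, (congrArg Subtype.val hi).symm⟩

end ActsIrreducibly

end IrreducibleEndomorphisms

section Solvable

variable {G : Type*} [Group G]

theorem isSolvable_of_commutator [Group.IsSolvable (commutator G)] : Group.IsSolvable G :=
  Group.isSolvable_of_ker_le_range (commutator G).subtype (Abelianization.of (G := G)) (by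
    rw [Abelianization.ker_of, range_subtype])

theorem eq_top_of_commutator_sup_eq_top [Group.IsSolvable G] {N : Subgroup G} [N.Normal]
    (hN : commutator G ⊔ N = ⊤) : N = ⊤ := by
  have hperfect : commutator (G ⧸ N) = ⊤ := by
    rw [← map_top_of_surjective _ (QuotientGroup.mk'_surjective N), ← hN, Subgroup.map_sup,
      QuotientGroup.map_mk'_self, sup_bot_eq, map_commutator_eq,
      MonoidHom.range_eq_top.mpr (QuotientGroup.mk'_surjective N)]
    rfl
  by_contra hne
  have : Nontrivial (G ⧸ N) := QuotientGroup.nontrivial_iff.mpr hne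
  exact (Group.IsSolvable.commutator_lt_top_of_nontrivial (G ⧸ N)).ne hperfect

end Solvable

/-- Every non-invertible element of the monoid absorbs `x` on the right. For the endomorphism
monoid of a Schmidt group this is a property of the retractions onto Sylow `q`-subgroups. -/
def AbsorbedByNonunits {M : Type*} [Monoid M] (x : M) : Prop :=
  ∀ f, ¬ IsUnit f → f * x = f

theorem AbsorbedByNonunits.map {M N : Type*} [Monoid M] [Monoid N] {x : M}
    (hx : AbsorbedByNonunits x) (Φ : M ≃* N) : AbsorbedByNonunits (Φ x) := fun f hf => by
  apply Φ.symm.injective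
  rw [map_mul, Φ.symm_apply_apply]
  exact hx _ fun hu => hf (by simpa using hu.map Φ)

/-- `e` is a retraction of the Schmidt group `G` with kernel `commutator G` onto its Sylow
`q`-subgroup `zpowers b`. -/
structure IsSchmidtRetraction (p q v : ℕ) {G : Type*} [Group G] (e : Monoid.End G) (b : G) :
    Prop extends IsCyclicRetraction e b where
  finite : Finite G
  not_isNilpotent : ¬ Group.IsNilpotent G
  isNilpotent_of_ne_top : ∀ K : Subgroup G, K ≠ ⊤ → Group.IsNilpotent K
  isPGroup : IsPGroup p (commutator G)
  prime_left : p.Prime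
  prime_right : q.Prime
  ne : p ≠ q
  pos : 1 ≤ v
  orderOf_eq : orderOf b = q ^ v
  ker_eq : MonoidHom.ker (e : G →* G) = commutator G

theorem IsSchmidtGroup.exists_isSchmidtRetraction {p q v : ℕ} {G : Type*} [Group G]
    (h : IsSchmidtGroup p q v G) (hp : p.Prime) (hq : q.Prime) (hpq : p ≠ q) (hv : 1 ≤ v) :
    ∃ (e : Monoid.End G) (b : G), IsSchmidtRetraction p q v e b := by
  obtain ⟨hfin, hnil, hsub, hpg, b, hb, hsup, hinf⟩ := h
  have hcompl : (zpowers b).IsComplement' (commutator G) := by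
    refine isComplement'_of_disjoint_and_mul_eq_univ (disjoint_iff.mpr (by rwa [inf_comm])) ?_
    rw [← mul_normal, sup_comm, hsup, coe_top]
  let E := hcompl.QuotientMulEquiv
  have hE : E (QuotientGroup.mk b) = ⟨b, mem_zpowers b⟩ :=
    E.symm.injective (by rw [MulEquiv.symm_apply_apply]; rfl)
  let e : G →* G := (zpowers b).subtype.comp (E.toMonoidHom.comp (QuotientGroup.mk' _))
  have hker : e.ker = commutator G := by
    ext g
    rw [← QuotientGroup.eq_one_iff (N := commutator G) g, ← E.map_eq_one_iff]
    exact (Subtype.ext_iff (a1 := E (QuotientGroup.mk g)) (a2 := 1)).symm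
  exact ⟨e, b, ⟨congrArg Subtype.val hE, fun g => (E (QuotientGroup.mk g)).2⟩,
    hfin, hnil, hsub, hpg, hp, hq, hpq, hv, hb, hker⟩

namespace IsSchmidtRetraction

variable {p q v : ℕ} {G : Type*} [Group G] {e : Monoid.End G} {b : G}

theorem map_eq_one_iff (h : IsSchmidtRetraction p q v e b) {g : G} :
    e g = 1 ↔ g ∈ commutator G := by
  rw [← h.ker_eq]
  rfl

theorem pow_eq_one (h : IsSchmidtRetraction p q v e b) : b ^ q ^ v = 1 := by
  rw [← h.orderOf_eq, pow_orderOf_eq_one]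

theorem dvd_orderOf (h : IsSchmidtRetraction p q v e b) : q ∣ orderOf b :=
  h.orderOf_eq ▸ dvd_pow_self q (Nat.one_le_iff_ne_zero.mp h.pos)

theorem ne_trivialEnd (h : IsSchmidtRetraction p q v e b) : e ≠ trivialEnd G := fun he =>
  h.prime_right.one_lt.ne' <| Nat.dvd_one.mp <| by
    rw [← orderOf_one (G := G), ← trivialEnd_apply b, ← he, h.map_gen]
    exact h.dvd_orderOf

theorem ne_one (h : IsSchmidtRetraction p q v e b) : e ≠ 1 := by
  rintro rfl
  exact h.not_isNilpotent (@CommGroup.isNilpotent G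
    { ‹Group G› with mul_comm := fun x y => (h.commute_map x y).eq })

theorem eq_top_of_commutator_le (h : IsSchmidtRetraction p q v e b) {S : Subgroup G}
    (hS : commutator G ≤ S) (hb : b ∈ S) : S = ⊤ :=
  top_le_iff.mp (h.ker_sup_zpowers ▸ sup_le (h.ker_eq ▸ hS) (zpowers_le.mpr hb))

theorem eq_top_of_normal (h : IsSchmidtRetraction p q v e b) {N : Subgroup G} [N.Normal]
    (hb : b ∈ N) : N = ⊤ := by
  have := h.finite
  have : Fact p.Prime := ⟨h.prime_left⟩
  have := h.isPGroup.isNilpotent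
  have : Group.IsSolvable G := isSolvable_of_commutator
  exact eq_top_of_commutator_sup_eq_top
    (h.eq_top_of_commutator_le le_sup_left (mem_sup_right hb))

theorem eq_top_of_forall_conj_mem (h : IsSchmidtRetraction p q v e b) {S : Subgroup G}
    (hS : ∀ u ∈ commutator G, u * b * u⁻¹ ∈ S) : S = ⊤ := by
  have hconj (g : G) : g * b * g⁻¹ ∈ S := by
    have hcomm : Commute (e g) b := commute_of_mem_zpowers (h.map_mem g) (mem_zpowers b)
    have := hS _ (h.map_eq_one_iff.mp (h.map_mul_inv_map g))
    rwa [mul_inv_rev, inv_inv, mul_assoc g, hcomm.inv_left.eq, ← mul_assoc, ← mul_assoc,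
      inv_mul_cancel_right] at this
  have hle : normalClosure {b} ≤ S := (closure_le S).mpr fun z hz => by
    obtain ⟨_, rfl, hbz⟩ := Group.mem_conjugatesOfSet_iff.mp hz
    obtain ⟨g, rfl⟩ := isConj_iff.mp hbz
    exact hconj g
  exact top_le_iff.mp (h.eq_top_of_normal (N := normalClosure {b}) (subset_normalClosure rfl) ▸ hle)

theorem end_ext_of_conj (h : IsSchmidtRetraction p q v e b) {f f' : Monoid.End G}
    (hff' : ∀ u ∈ commutator G, f (u * b * u⁻¹) = f' (u * b * u⁻¹)) : f = f' :=
  have heq : MonoidHom.eqLocus (f : G →* G) f' = ⊤ := h.eq_top_of_forall_conj_mem hff'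
  DFunLike.ext _ _ fun g => heq.ge (mem_top g)

theorem gen_notMem_center (h : IsSchmidtRetraction p q v e b) : b ∉ center G := fun hb =>
  h.not_isNilpotent <|
  @CommGroup.isNilpotent G (Group.commGroupOfCenterEqTop (h.eq_top_of_normal hb))

theorem absorbedByNonunits (h : IsSchmidtRetraction p q v e b) : AbsorbedByNonunits e := by
  intro f hf
  have := h.finite
  have := h.isNilpotent_of_ne_top _ (range_ne_top_of_not_isUnit hf)
  have hfb : IsPGroup q (zpowers (f b)) :=
    isPGroup_zpowers (n := v) (by rw [← map_pow, h.pow_eq_one, map_one])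
  refine h.end_ext_of_conj fun u hu => ?_
  have hcomm : Commute (f u) (f b) :=
    commute_of_isPGroup_of_mem (K := MonoidHom.range (f : G →* G)) h.prime_left h.prime_right h.ne
      (h.isPGroup.map (f : G →* G)) hfb (mem_map_of_mem (f : G →* G) hu)
      (MonoidHom.mem_range.mpr ⟨u, rfl⟩) (mem_zpowers _) (MonoidHom.mem_range.mpr ⟨b, rfl⟩)
  calc (f * e) (u * b * u⁻¹) = f (e (u * b * u⁻¹)) := rfl
    _ = f b := by
        rw [map_mul e, map_mul e, map_inv, h.map_eq_one_iff.mpr hu, h.map_gen, one_mul, inv_one,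
          mul_one]
    _ = f (u * b * u⁻¹) := by rw [map_mul, map_mul, hcomm.eq, map_inv, mul_inv_cancel_right]

theorem commute_of_ne_top (h : IsSchmidtRetraction p q v e b) {K : Subgroup G} (hK : K ≠ ⊤)
    {u y : G} (hu : u ∈ commutator G) (huK : u ∈ K) (hy : y ∈ zpowers b) (hyK : y ∈ K) :
    Commute u y :=
  have := h.finite
  have := h.isNilpotent_of_ne_top K hK
  commute_of_isPGroup_of_mem h.prime_left h.prime_right h.ne h.isPGroup
    (isPGroup_zpowers h.pow_eq_one) hu huK hy hyK

theorem gen_pow_mem_center (h : IsSchmidtRetraction p q v e b) : b ^ q ∈ center G := by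
  have hK : (zpowers (b ^ q)).comap (e : G →* G) ≠ ⊤ := fun htop => by
    have hb : e b ∈ zpowers (b ^ q) := htop.ge (mem_top b)
    rw [h.map_gen] at hb
    exact notMem_zpowers_pow h.prime_right.ne_one h.dvd_orderOf hb
  have hcomm {u : G} (hu : u ∈ commutator G) : Commute u (b ^ q) := by
    refine h.commute_of_ne_top hK hu ?_ (pow_mem (mem_zpowers b) q) ?_
    · change e u ∈ zpowers (b ^ q)
      rw [h.map_eq_one_iff.mpr hu]
      exact one_mem _
    · change e (b ^ q) ∈ zpowers (b ^ q)
      rw [map_pow, h.map_gen]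
      exact mem_zpowers _
  refine Set.singleton_subset_iff.mp <| centralizer_eq_top_iff_subset.mp <|
    h.eq_top_of_commutator_le (fun u hu => mem_centralizer_singleton_iff.mpr (hcomm hu)) ?_
  exact mem_centralizer_singleton_iff.mpr (Commute.self_pow b q)

theorem commute_of_lt_commutator (h : IsSchmidtRetraction p q v e b) {R : Subgroup G}
    (hR : R < commutator G) (hb : ∀ r ∈ R, b * r * b⁻¹ ∈ R) {r : G} (hr : r ∈ R) :
    Commute r b := by
  have := h.finite
  have hK : R ⊔ zpowers b ≠ ⊤ := fun htop => hR.not_ge fun u hu => by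
    have hnorm : normalizer (R : Set G) = ⊤ := top_le_iff.mp <| htop ▸
      sup_le le_normalizer (zpowers_le.mpr (mem_normalizer_fintype hb))
    have : R.Normal := normalizer_eq_top_iff.mp hnorm
    obtain ⟨r, hr, y, hy, rfl⟩ := mem_sup_of_normal_left.mp (htop.ge (mem_top u))
    have hy1 : y = 1 := by
      rw [← h.map_of_mem_zpowers hy, h.map_eq_one_iff]
      exact ((commutator G).mul_mem_cancel_left (hR.le hr)).mp hu
    rwa [hy1, mul_one]
  exact h.commute_of_ne_top hK (hR.le hr) (mem_sup_left hr) (mem_zpowers b)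
    (mem_sup_right (mem_zpowers b))

end IsSchmidtRetraction

section FixedSubgroup

variable {G : Type*} [Group G] {b : G}

/-- The centralizer of `b` in the commutator subgroup. -/
def fixedSubgroup (b : G) : Subgroup (commutator G) :=
  (centralizer {b}).subgroupOf (commutator G)

theorem mem_fixedSubgroup {u : commutator G} : u ∈ fixedSubgroup b ↔ Commute (u : G) b :=
  mem_centralizer_singleton_iff

/-- The monoid of endomorphisms of `G` fixing `b`. -/
def endFixing (b : G) : Submonoid (Monoid.End G) where
  carrier := {f | f b = b}
  one_mem' := rfl
  mul_mem' {f _} hf hf' := (congrArg f hf').trans hf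

theorem innerEnd_mem_endFixing (b : G) : innerEnd G b ∈ endFixing b :=
  mul_inv_cancel_right b b

theorem commute_innerEnd {f : Monoid.End G} (hf : f ∈ endFixing b) : Commute f (innerEnd G b) :=
  (mul_innerEnd f b).trans (by rw [show f b = b from hf])

theorem map_mem_commutator (f : Monoid.End G) {u : G} (hu : u ∈ commutator G) :
    f u ∈ commutator G :=
  (map_commutator_eq G (f : G →* G)).trans_le (commutator_mono le_top le_top)
    (mem_map_of_mem (f : G →* G) hu)

/-- The restriction of an endomorphism to the commutator subgroup. -/
def restrictCommutator (f : Monoid.End G) : commutator G →* commutator G :=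
  ((f : G →* G).comp (commutator G).subtype).codRestrict _ fun u => map_mem_commutator f u.2

theorem fixedSubgroup_le_comap {f : Monoid.End G} (hf : f ∈ endFixing b) :
    fixedSubgroup b ≤ (fixedSubgroup b).comap (restrictCommutator f) := fun u hu => by
  have : Commute (f u) (f b) := (mem_fixedSubgroup.mp hu).map f
  exact mem_fixedSubgroup.mpr (by rwa [show f b = b from hf] at this)

/-- The action of the endomorphisms fixing `b` on the quotient of the commutator subgroup by the
centralizer of `b`. It is written additively because, for a Schmidt group, it is a module on which
conjugation by `b` acts irreducibly. -/
def quotientAction (b : G) [(fixedSubgroup b).Normal] :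
    endFixing b →* AddMonoid.End (Additive (commutator G ⧸ fixedSubgroup b)) where
  toFun f := MonoidHom.toAdditive
    (QuotientGroup.map _ _ (restrictCommutator f.1) (fixedSubgroup_le_comap f.2))
  map_one' := DFunLike.ext _ _ <| by rintro ⟨u⟩; rfl
  map_mul' f f' := DFunLike.ext _ _ <| by rintro ⟨u⟩; rfl

theorem quotientAction_mk [(fixedSubgroup b).Normal] (f : endFixing b) (u : commutator G) :
    quotientAction b f (Additive.ofMul (QuotientGroup.mk u)) =
      Additive.ofMul (QuotientGroup.mk (restrictCommutator f.1 u)) :=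
  rfl

end FixedSubgroup

namespace IsSchmidtRetraction

variable {p q v : ℕ} {G : Type*} [Group G] {e : Monoid.End G} {b : G}

open scoped IsMulCommutative

theorem fixedSubgroup_ne_top (h : IsSchmidtRetraction p q v e b) :
    fixedSubgroup b ≠ (⊤ : Subgroup (commutator G)) := fun htop => by
  have hcentral : centralizer {b} = ⊤ := h.eq_top_of_commutator_le (subgroupOf_eq_top.mp htop)
    (mem_centralizer_singleton_iff.mpr rfl)
  exact h.gen_notMem_center (centralizer_eq_top_iff_subset.mp hcentral rfl)

theorem le_fixedSubgroup (h : IsSchmidtRetraction p q v e b) {R : Subgroup (commutator G)}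
    (hR : R ≠ ⊤) (hb : ∀ r ∈ R, restrictCommutator (innerEnd G b) r ∈ R) :
    R ≤ fixedSubgroup b := fun r hr => by
  refine mem_fixedSubgroup.mpr <|
    h.commute_of_lt_commutator (R := R.map (commutator G).subtype) ?_ ?_ (mem_map_of_mem _ hr)
  · refine lt_of_le_of_ne (map_subtype_le R) fun heq => hR ?_
    rwa [← map_subtype_inj, ← MonoidHom.range_eq_map, range_subtype]
  · rintro _ ⟨s, hs, rfl⟩
    exact ⟨_, hb s hs, rfl⟩

theorem commutator_le_fixedSubgroup (h : IsSchmidtRetraction p q v e b) :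
    _root_.commutator (commutator G) ≤ fixedSubgroup b := by
  have := h.finite
  have : Fact p.Prime := ⟨h.prime_left⟩
  have := h.isPGroup.isNilpotent
  have : Nontrivial (commutator G) := not_subsingleton_iff_nontrivial.mp fun _ =>
    h.fixedSubgroup_ne_top (Subsingleton.elim _ _)
  exact h.le_fixedSubgroup
    (Group.IsSolvable.commutator_lt_top_of_nontrivial (commutator G)).ne fun _ hr =>
      map_mem_commutator (restrictCommutator (innerEnd G b)) hr

theorem normal_fixedSubgroup (h : IsSchmidtRetraction p q v e b) : (fixedSubgroup b).Normal :=
  Normal.of_commutator_le _ h.commutator_le_fixedSubgroup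

theorem isMulCommutative_quotient (h : IsSchmidtRetraction p q v e b)
    [(fixedSubgroup b).Normal] : IsMulCommutative (commutator G ⧸ fixedSubgroup b) :=
  Normal.quotient_commutative_iff_commutator_le.mpr h.commutator_le_fixedSubgroup

theorem quotientAction_injective (h : IsSchmidtRetraction p q v e b)
    [(fixedSubgroup b).Normal] : Function.Injective (quotientAction b) := fun f f' hff' => by
  refine Subtype.ext (h.end_ext_of_conj fun u hu => ?_)
  have hmk := DFunLike.congr_fun hff' (Additive.ofMul (QuotientGroup.mk ⟨u, hu⟩))
  rw [quotientAction_mk, quotientAction_mk] at hmk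
  have hcomm : Commute ((f.1 u)⁻¹ * f'.1 u) b :=
    mem_fixedSubgroup.mp (QuotientGroup.eq.mp (Additive.ofMul.injective hmk))
  calc f.1 (u * b * u⁻¹) = f.1 u * b * (f.1 u)⁻¹ := by
        rw [map_mul, map_mul, map_inv, show f.1 b = b from f.2]
    _ = f.1 u * (b * ((f.1 u)⁻¹ * f'.1 u)) * (f'.1 u)⁻¹ := by group
    _ = f.1 u * ((f.1 u)⁻¹ * f'.1 u * b) * (f'.1 u)⁻¹ := by rw [hcomm.eq]
    _ = f'.1 u * b * (f'.1 u)⁻¹ := by group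
    _ = f'.1 (u * b * u⁻¹) := by rw [map_mul, map_mul, map_inv, show f'.1 b = b from f'.2]

theorem actsIrreducibly (h : IsSchmidtRetraction p q v e b) [(fixedSubgroup b).Normal]
    [IsMulCommutative (commutator G ⧸ fixedSubgroup b)] :
    ActsIrreducibly (quotientAction b ⟨innerEnd G b, innerEnd_mem_endFixing b⟩) := fun W hW => by
  let R : Subgroup (commutator G) :=
    (AddSubgroup.toSubgroup' W).comap (QuotientGroup.mk' (fixedSubgroup b))
  have hRW {u : commutator G} : u ∈ R ↔ Additive.ofMul (QuotientGroup.mk u) ∈ W := Iff.rfl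
  by_cases hR : R = ⊤
  · right
    refine eq_top_iff.mpr ?_
    rintro ⟨u⟩ -
    exact hRW.mp (hR.ge (mem_top u))
  · left
    have hle : R ≤ fixedSubgroup b := h.le_fixedSubgroup hR fun r hr => hW _ hr
    refine eq_bot_iff.mpr ?_
    rintro ⟨u⟩ hu
    exact (QuotientGroup.eq_one_iff u).mpr (hle hu)

theorem commute_of_mem_endFixing (h : IsSchmidtRetraction p q v e b) {f f' : Monoid.End G}
    (hf : f ∈ endFixing b) (hf' : f' ∈ endFixing b) : Commute f f' := by
  have := h.normal_fixedSubgroup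
  have := h.isMulCommutative_quotient
  let β : endFixing b := ⟨innerEnd G b, innerEnd_mem_endFixing b⟩
  have hβ (s : endFixing b) : Commute s β := Subtype.ext (commute_innerEnd s.2)
  have := h.actsIrreducibly.commute ((hβ ⟨f, hf⟩).map (quotientAction b))
    ((hβ ⟨f', hf'⟩).map (quotientAction b))
  exact (this.of_map h.quotientAction_injective).map (endFixing b).subtype

theorem exists_eq_innerEnd_pow (h : IsSchmidtRetraction p q v e b) {f : Monoid.End G}
    (hf : f ∈ endFixing b) (hfq : f ^ q = 1) : ∃ i, f = innerEnd G b ^ i := by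
  have := h.normal_fixedSubgroup
  have := h.isMulCommutative_quotient
  let β : endFixing b := ⟨innerEnd G b, innerEnd_mem_endFixing b⟩
  have hβq : β ^ q = 1 := Subtype.ext <|
    (map_pow (innerEnd G) b q).symm.trans (innerEnd_eq_one_iff.mpr h.gen_pow_mem_center)
  have hβ_ne : β ≠ 1 := fun heq =>
    h.gen_notMem_center (innerEnd_eq_one_iff.mp (congrArg Subtype.val heq))
  let φ : endFixing b := ⟨f, hf⟩
  have hφq : φ ^ q = 1 := Subtype.ext hfq
  have hφ : Commute φ β := Subtype.ext (commute_innerEnd hf)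
  obtain ⟨i, hi⟩ := h.actsIrreducibly.exists_eq_pow h.prime_right (by rw [← map_pow, hβq, map_one])
    (fun heq => hβ_ne (h.quotientAction_injective (heq.trans (map_one _).symm)))
    (hφ.map (quotientAction b)) (by rw [← map_pow, hφq, map_one])
  rw [← map_pow] at hi
  exact ⟨i, congrArg Subtype.val (h.quotientAction_injective hi)⟩

end IsSchmidtRetraction

theorem innerEnd_mul_mul_innerEnd_mul {G : Type*} [Group G] (y z : G) (s t : Monoid.End G) :
    innerEnd G y * s * (innerEnd G z * t) = innerEnd G (y * s z) * (s * t) := by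
  rw [map_mul, mul_assoc, ← mul_assoc s, mul_innerEnd, mul_assoc, mul_assoc]

namespace IsSchmidtRetraction

variable {p q v : ℕ} {G : Type*} [Group G] {e : Monoid.End G} {b : G}

theorem eq_one_of_mem_commutator (h : IsSchmidtRetraction p q v e b) {u : G}
    (hu : u ∈ commutator G) (huq : u ^ q ^ v = 1) : u = 1 :=
  eq_one_of_mem_of_pow_eq_one h.prime_left h.prime_right h.ne h.isPGroup hu huq

theorem eq_of_map_eq (h : IsSchmidtRetraction p q v e b) {y z : G} (hyz : Commute y z)
    (hy : y ^ q ^ v = 1) (hz : z ^ q ^ v = 1) (heyz : e y = e z) : y = z := by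
  have hmem : y * z⁻¹ ∈ commutator G :=
    h.map_eq_one_iff.mp (by rw [map_mul, map_inv, heyz, mul_inv_cancel])
  refine mul_inv_eq_one.mp (h.eq_one_of_mem_commutator hmem ?_)
  rw [hyz.inv_right.mul_pow, inv_pow, hy, hz, inv_one, mul_one]

theorem card_eq (h : IsSchmidtRetraction p q v e b) :
    Nat.card G = Nat.card (commutator G) * q ^ v := by
  have hindex : (MonoidHom.ker (e : G →* G)).index = q ^ v :=
    (index_ker _).trans (by rw [h.range_eq, Nat.card_zpowers, h.orderOf_eq])
  rw [← (commutator G).card_mul_index, ← hindex, h.ker_eq]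

theorem not_dvd_index_zpowers (h : IsSchmidtRetraction p q v e b) {y : G}
    (hy : orderOf y = q ^ v) : ¬ q ∣ (zpowers y).index := by
  have := h.finite
  have : Fact p.Prime := ⟨h.prime_left⟩
  obtain ⟨a, ha⟩ := IsPGroup.iff_card.mp h.isPGroup
  have hindex : (zpowers y).index = p ^ a := by
    refine Nat.eq_of_mul_eq_mul_left (pow_pos h.prime_right.pos v) ?_
    rw [← hy, ← Nat.card_zpowers, card_mul_index, h.card_eq, ha, Nat.card_zpowers, hy, mul_comm]
  rw [hindex]
  exact fun hdvd =>
    h.ne ((Nat.prime_dvd_prime_iff_eq h.prime_right h.prime_left).mp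
      (h.prime_right.dvd_of_dvd_pow hdvd)).symm

-- Sylow's theorem makes the two cyclic groups of order `q ^ v` conjugate, and `e` then identifies
-- the generators.
theorem exists_conj_eq (h : IsSchmidtRetraction p q v e b) {y : G} (hy : y ^ q ^ v = 1)
    (hey : e y = b) : ∃ g, g * b * g⁻¹ = y := by
  have := h.finite
  have : Fact q.Prime := ⟨h.prime_right⟩
  have horder : orderOf y = q ^ v := by
    refine Nat.dvd_antisymm (orderOf_dvd_of_pow_eq_one hy) ?_
    rw [← h.orderOf_eq, ← hey]
    exact orderOf_map_dvd (e : G →* G) y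
  let P := (isPGroup_zpowers h.pow_eq_one).toSylow (h.not_dvd_index_zpowers h.orderOf_eq)
  let Q := (isPGroup_zpowers hy).toSylow (h.not_dvd_index_zpowers horder)
  obtain ⟨g, hg⟩ := MulAction.exists_smul_eq G P Q
  have hmem : g * b * g⁻¹ ∈ zpowers y := by
    have hconj : MulAut.conj g • zpowers b = zpowers y := congrArg Sylow.toSubgroup hg
    rw [← hconj]
    exact smul_mem_pointwise_smul b _ _ (mem_zpowers b)
  refine ⟨g, h.eq_of_map_eq (commute_of_mem_zpowers hmem (mem_zpowers y))
    (pow_eq_one_of_mem_zpowers hmem hy) hy ?_⟩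
  rw [hey, ← innerEnd_apply, ← end_mul_apply, h.mul_innerEnd, h.map_gen]

theorem exists_eq_innerEnd_mul (h : IsSchmidtRetraction p q v e b) {f : Monoid.End G}
    (hf : e * f = e) : ∃ y, ∃ s ∈ endFixing b, f = innerEnd G y * s := by
  obtain ⟨y, hy⟩ := h.exists_conj_eq (y := f b) (by rw [← map_pow, h.pow_eq_one, map_one])
    ((DFunLike.congr_fun hf b).trans h.map_gen)
  refine ⟨y, innerEnd G y⁻¹ * f, ?_, ?_⟩
  · change innerEnd G y⁻¹ (f b) = b
    rw [← hy, innerEnd_apply]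
    group
  · rw [← mul_assoc, ← map_mul, mul_inv_cancel, map_one, one_mul]

theorem exists_mul_eq_innerEnd_mul (h : IsSchmidtRetraction p q v e b) {f f' : Monoid.End G}
    (hf : e * f = e) (hf' : e * f' = e) : ∃ y, f * f' = innerEnd G y * (f' * f) := by
  obtain ⟨y, s, hs, rfl⟩ := h.exists_eq_innerEnd_mul hf
  obtain ⟨z, t, ht, rfl⟩ := h.exists_eq_innerEnd_mul hf'
  refine ⟨y * s z * (z * t y)⁻¹, ?_⟩
  rw [innerEnd_mul_mul_innerEnd_mul, innerEnd_mul_mul_innerEnd_mul,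
    (h.commute_of_mem_endFixing hs ht).eq,
    ← mul_assoc (innerEnd G (_ * _⁻¹)), ← map_mul, inv_mul_cancel_right]

theorem mul_eq_of_not_exists_mul_eq (h : IsSchmidtRetraction p q v e b) {F α : Monoid.End G}
    (hFe : F * e = F) (heF : e * F = F) (hF : ¬ ∃ g, F * g = e) (hα : e * α = e) : α * F = F := by
  have hFb : F b ∈ zpowers b := by
    rw [← heF]
    exact h.map_mem _
  rcases mem_zpowers_or_mem_zpowers_pow h.prime_right h.orderOf_eq hFb with hb | hFb'
  · obtain ⟨k, hk⟩ := mem_zpowers_iff.mp hb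
    obtain ⟨g, hge, hgb⟩ := h.exists_end_map_gen (orderOf_dvd_of_mem_zpowers ⟨k, rfl⟩ :
      orderOf (b ^ k) ∣ orderOf b)
    refine absurd ⟨g, h.end_ext (by rw [mul_assoc, hge]) h.isIdempotentElem ?_⟩ hF
    rw [end_mul_apply, hgb, map_zpow, hk, h.map_gen]
  · have hcentral : F b ∈ center G := zpowers_le.mpr h.gen_pow_mem_center hFb'
    have hpow : F b ^ q ^ v = 1 := by rw [← map_pow, h.pow_eq_one, map_one]
    refine h.end_ext (by rw [mul_assoc, hFe]) hFe
      (h.eq_of_map_eq (mem_center_iff.mp hcentral _) ?_ hpow (DFunLike.congr_fun hα (F b)))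
    rw [end_mul_apply, ← map_pow, hpow, map_one]

theorem eq_trivialEnd (h : IsSchmidtRetraction p q v e b) {F : Monoid.End G} (hFe : F * e = F)
    (heF : e * F = trivialEnd G) : F = trivialEnd G := by
  refine h.end_ext hFe rfl (h.eq_one_of_mem_commutator ?_ ?_)
  · exact h.map_eq_one_iff.mp (DFunLike.congr_fun heF b)
  · rw [← map_pow, h.pow_eq_one, map_one]

end IsSchmidtRetraction

section CentralQuotient

variable {H : Type*} [Group H]

theorem commutatorElement_mul_mul_of_mem_center {y z k l : H} (hk : k ∈ center H)
    (hl : l ∈ center H) : ⁅y * k, z * l⁆ = ⁅y, z⁆ := by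
  calc ⁅y * k, z * l⁆ = y * (k * (z * l * k⁻¹)) * y⁻¹ * l⁻¹ * z⁻¹ := by
        rw [commutatorElement_def]; group
    _ = y * z * (l * y⁻¹) * l⁻¹ * z⁻¹ := by
        rw [← mem_center_iff.mp hk]; group
    _ = ⁅y, z⁆ := by
        rw [← mem_center_iff.mp hl, commutatorElement_def]; group

theorem commutator_le_of_sup_center_eq_top {K : Subgroup H} (hK : K ⊔ center H = ⊤) :
    commutator H ≤ K := by
  rw [commutator_eq_closure, closure_le]
  rintro _ ⟨y, z, rfl⟩
  obtain ⟨k, hk, s, hs, rfl⟩ := mem_sup_of_normal_right.mp (hK.ge (mem_top y))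
  obtain ⟨l, hl, t, ht, rfl⟩ := mem_sup_of_normal_right.mp (hK.ge (mem_top z))
  rw [commutatorElement_mul_mul_of_mem_center hs ht]
  exact mul_mem (mul_mem (mul_mem hk hl) (inv_mem hk)) (inv_mem hl)

theorem finite_commutatorSet [(center H).FiniteIndex] : (commutatorSet H).Finite := by
  refine (Set.finite_range fun z : (H ⧸ center H) × (H ⧸ center H) =>
    ⁅z.1.out, z.2.out⁆).subset ?_
  rintro _ ⟨y, z, rfl⟩
  obtain ⟨k, hk⟩ := QuotientGroup.mk_out_eq_mul (center H) y
  obtain ⟨l, hl⟩ := QuotientGroup.mk_out_eq_mul (center H) z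
  exact ⟨(y, z), (congrArg₂ _ hk hl).trans (commutatorElement_mul_mul_of_mem_center k.2 l.2)⟩

end CentralQuotient

namespace IsCyclicRetraction

variable {H : Type*} [Group H] {x : Monoid.End H} {c : H}

theorem gen_notMem_center (hx : IsCyclicRetraction x c) (hx' : AbsorbedByNonunits x)
    (htriv : x ≠ trivialEnd H) (hone : x ≠ 1) : c ∉ center H := by
  intro hc
  have hcentral (y : H) : x y ∈ center H := zpowers_le.mpr hc (hx.map_mem y)
  let f : Monoid.End H := MonoidHom.mk' (fun y => y * (x y)⁻¹) fun y z => by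
    rw [map_mul, mul_inv_rev, mul_assoc y, ← mul_assoc z,
      mem_center_iff.mp (inv_mem (hcentral y)), ← mul_assoc]
  have hf (y : H) : f y = y * (x y)⁻¹ := rfl
  have hfx (y : H) : f (x y) = 1 := by rw [hf, hx.map_map, mul_inv_cancel]
  have hnonunit : ¬ IsUnit f := fun hunit => htriv <| DFunLike.ext _ _ fun y =>
    (bijective_of_isUnit hunit).1 ((hfx y).trans (map_one f).symm)
  refine hone (DFunLike.ext _ _ fun y => ?_)
  have hfy : f y = 1 := by rw [← hx' f hnonunit, end_mul_apply, hfx]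
  exact (mul_inv_eq_one.mp hfy).symm

end IsCyclicRetraction

section NoncentralElement

variable {H : Type*} [Group H] {x : Monoid.End H} {c : H}

theorem not_isUnit_of_commute (hc : c ∉ center H) {f : Monoid.End H}
    (hf : ∀ y z, Commute (f y) (f z)) : ¬ IsUnit f := fun hunit =>
  hc <| mem_center_iff.mpr fun z => by
    obtain ⟨y, rfl⟩ := (bijective_of_isUnit hunit).2 c
    obtain ⟨w, rfl⟩ := (bijective_of_isUnit hunit).2 z
    exact hf w y

theorem AbsorbedByNonunits.map_eq_one_of_commute (hx : AbsorbedByNonunits x) (hc : c ∉ center H)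
    {f : Monoid.End H} (hf : ∀ y z, Commute (f y) (f z)) {u : H} (hu : x u = 1) : f u = 1 := by
  rw [← hx f (not_isUnit_of_commute hc hf), end_mul_apply, hu, map_one]

-- The transfer into the centre is an endomorphism `y ↦ y ^ (center H).index` with abelian
-- image.
theorem AbsorbedByNonunits.pow_index_center_eq_one [(center H).FiniteIndex]
    (hx : AbsorbedByNonunits x) (hc : c ∉ center H) {u : H} (hu : x u = 1) :
    u ^ (center H).index = 1 := by
  let f : Monoid.End H := (center H).subtype.comp (MonoidHom.transferCenterPow H)
  have hcentral (y : H) : f y ∈ center H := (MonoidHom.transferCenterPow H y).2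
  exact hx.map_eq_one_of_commute (f := f) hc
    (fun y z => (mem_center_iff.mp (hcentral y) _).symm) hu

end NoncentralElement

namespace IsCyclicRetraction

variable {H : Type*} [Group H] [(center H).FiniteIndex] {x : Monoid.End H} {c : H}

theorem ker_eq_commutator (hx : IsCyclicRetraction x c) (hx' : AbsorbedByNonunits x)
    (hc : c ∉ center H) (hfin : IsOfFinOrder c) :
    MonoidHom.ker (x : H →* H) = commutator H := by
  refine le_antisymm (fun u hu => ?_) hx.commutator_le_ker
  have hexp (y : H) : y ^ (orderOf c * (center H).index) = 1 := by
    rw [pow_mul]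
    refine hx'.pow_index_center_eq_one hc ?_
    rw [map_pow]
    exact pow_eq_one_of_mem_zpowers (hx.map_mem y) (pow_orderOf_eq_one c)
  by_contra hu'
  obtain ⟨f, hfu, hf⟩ := exists_end_commute_ne_one
    (mul_pos hfin.orderOf_pos (Nat.pos_of_ne_zero FiniteIndex.index_ne_zero)) hexp hu'
  exact hfu (hx'.map_eq_one_of_commute hc hf hu)

theorem finite (hx : IsCyclicRetraction x c) (hx' : AbsorbedByNonunits x) (hc : c ∉ center H)
    (hfin : IsOfFinOrder c) : Finite H := by
  have : Finite (commutatorSet H) := finite_commutatorSet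
  have hker : Finite (MonoidHom.ker (x : H →* H)) := by
    rw [hx.ker_eq_commutator hx' hc hfin]
    infer_instance
  have hrange : Finite (MonoidHom.range (x : H →* H)) := by
    rw [hx.range_eq]
    exact hfin.finite_zpowers
  exact (MonoidHom.finite_iff_finite_ker_range (x : H →* H)).mpr ⟨hker, hrange⟩

end IsCyclicRetraction

theorem isNilpotent_of_range_le {G H U : Type*} [Group G] [Group H] [Group U]
    [Group.IsNilpotent G] {f : G →* U} {g : H →* U} (hg : g.ker ≤ center H)
    (hgf : g.range ≤ f.range) : Group.IsNilpotent H :=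
  have : Group.IsNilpotent f.range :=
    Group.nilpotent_of_surjective f.rangeRestrict f.rangeRestrict_surjective
  Subgroup.isNilpotent_of_ker_le_center (g.codRestrict f.range fun y => hgf ⟨y, rfl⟩)
    (by rwa [MonoidHom.ker_codRestrict])

section TransportedInnerUnits

variable {G H : Type*} [Group G] [Group H]

/-- Conjugation in `G`, transported to the unit group of `Monoid.End H` along an isomorphism of
endomorphism monoids. -/
def transportedInnerUnits (Φ : Monoid.End G ≃* Monoid.End H) : G →* (Monoid.End H)ˣ :=
  (Units.mapEquiv Φ).toMonoidHom.comp (innerUnits G)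

@[simp]
theorem coe_transportedInnerUnits (Φ : Monoid.End G ≃* Monoid.End H) (g : G) :
    (transportedInnerUnits Φ g : Monoid.End H) = Φ (innerEnd G g) := rfl

theorem ker_transportedInnerUnits (Φ : Monoid.End G ≃* Monoid.End H) :
    (transportedInnerUnits Φ).ker = center G := by
  rw [← ker_innerUnits]
  exact MonoidHom.ker_mulEquiv_comp _ (Units.mapEquiv Φ)

end TransportedInnerUnits

/-- `Φ` carries a retraction `e` of a Schmidt group `G` onto a Sylow `q`-subgroup to a retraction of
`H` onto a cyclic group of the same order, generated by `c`. -/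
structure IsSchmidtTransfer (p q v : ℕ) {G H : Type*} [Group G] [Group H]
    (Φ : Monoid.End G ≃* Monoid.End H) (e : Monoid.End G) (b : G) (c : H) : Prop where
  source : IsSchmidtRetraction p q v e b
  target : IsCyclicRetraction (Φ e) c
  orderOf_eq : orderOf c = q ^ v

theorem IsSchmidtRetraction.exists_isSchmidtTransfer {p q v : ℕ} {G H : Type*} [Group G] [Group H]
    {e : Monoid.End G} {b : G} (h : IsSchmidtRetraction p q v e b)
    (Φ : Monoid.End G ≃* Monoid.End H) : ∃ c, IsSchmidtTransfer p q v Φ e b c := by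
  have hcard : Nat.card (MonoidHom.range (e : G →* G)) = q ^ v := by
    rw [h.range_eq, Nat.card_zpowers, h.orderOf_eq]
  have : IsCyclic (MonoidHom.range (e : G →* G)) := by
    rw [h.range_eq]
    infer_instance
  obtain ⟨hcyc, hcard'⟩ :=
    isCyclic_of_end_equiv h.prime_right hcard (endRangeEquiv Φ h.isIdempotentElem)
  obtain ⟨c, hc, hcv⟩ :=
    IsCyclicRetraction.exists_of_isCyclic_range (h.isIdempotentElem.map Φ) (hcyc := hcyc)
  exact ⟨c, h, hc, hcv.trans hcard'⟩

namespace IsSchmidtTransfer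

variable {p q v : ℕ} {G H : Type*} [Group G] [Group H] {Φ : Monoid.End G ≃* Monoid.End H}
  {e : Monoid.End G} {b : G} {c : H}

theorem mul_eq_of_not_exists_mul_eq (h : IsSchmidtTransfer p q v Φ e b c) {f α : Monoid.End H}
    (hfe : f * Φ e = f) (hef : Φ e * f = f) (hf : ¬ ∃ g, f * g = Φ e) (hα : Φ e * α = Φ e) :
    α * f = f := by
  obtain ⟨F, rfl⟩ := Φ.surjective f
  obtain ⟨A, rfl⟩ := Φ.surjective α
  simp only [← map_mul, Φ.injective.eq_iff] at hfe hef hα ⊢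
  refine h.source.mul_eq_of_not_exists_mul_eq hfe hef (fun ⟨g, hg⟩ => hf ⟨Φ g, ?_⟩) hα
  rw [← map_mul, hg]

theorem eq_trivialEnd (h : IsSchmidtTransfer p q v Φ e b c) {f : Monoid.End H}
    (hfe : f * Φ e = f) (hef : Φ e * f = trivialEnd H) : f = trivialEnd H := by
  obtain ⟨F, rfl⟩ := Φ.surjective f
  simp only [← map_trivialEnd Φ, ← map_mul, Φ.injective.eq_iff] at hfe hef ⊢
  exact h.source.eq_trivialEnd hfe hef

theorem exists_mul_eq_map_innerEnd_mul (h : IsSchmidtTransfer p q v Φ e b c) {f f' : Monoid.End H}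
    (hf : Φ e * f = Φ e) (hf' : Φ e * f' = Φ e) :
    ∃ g, f * f' = Φ (innerEnd G g) * (f' * f) := by
  obtain ⟨F, rfl⟩ := Φ.surjective f
  obtain ⟨F', rfl⟩ := Φ.surjective f'
  simp only [← map_mul, Φ.injective.eq_iff] at hf hf' ⊢
  exact h.source.exists_mul_eq_innerEnd_mul hf hf'

theorem finiteIndex_center (h : IsSchmidtTransfer p q v Φ e b c) : (center H).FiniteIndex := by
  have := h.source.finite
  have : Finite (Monoid.End G) := DFunLike.finite _
  have : Finite (Monoid.End H) := Finite.of_equiv _ Φ.toEquiv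
  exact _root_.finiteIndex_center H

theorem absorbedByNonunits (h : IsSchmidtTransfer p q v Φ e b c) : AbsorbedByNonunits (Φ e) :=
  h.source.absorbedByNonunits.map Φ

theorem gen_notMem_center (h : IsSchmidtTransfer p q v Φ e b c) : c ∉ center H :=
  h.target.gen_notMem_center h.absorbedByNonunits
    (map_trivialEnd Φ ▸ Φ.injective.ne h.source.ne_trivialEnd)
    (map_one Φ ▸ Φ.injective.ne h.source.ne_one)

theorem isOfFinOrder_gen (h : IsSchmidtTransfer p q v Φ e b c) : IsOfFinOrder c :=
  orderOf_pos_iff.mp (h.orderOf_eq ▸ pow_pos h.source.prime_right.pos v)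

theorem gen_notMem_zpowers_pow (h : IsSchmidtTransfer p q v Φ e b c) : c ∉ zpowers (c ^ q) :=
  notMem_zpowers_pow h.source.prime_right.ne_one
    (h.orderOf_eq ▸ h.source.orderOf_eq ▸ h.source.dvd_orderOf)

theorem ker_eq_commutator (h : IsSchmidtTransfer p q v Φ e b c) :
    MonoidHom.ker (Φ e : H →* H) = commutator H :=
  have := h.finiteIndex_center
  h.target.ker_eq_commutator h.absorbedByNonunits h.gen_notMem_center h.isOfFinOrder_gen

theorem finite (h : IsSchmidtTransfer p q v Φ e b c) : Finite H :=
  have := h.finiteIndex_center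
  h.target.finite h.absorbedByNonunits h.gen_notMem_center h.isOfFinOrder_gen

theorem gen_pow_mem_center (h : IsSchmidtTransfer p q v Φ e b c) : c ^ q ∈ center H := by
  obtain ⟨f, hfe, hfc⟩ := h.target.exists_end_map_gen (orderOf_pow_dvd (x := c) q)
  have hmem (y : H) : f y ∈ zpowers (c ^ q) := hfc ▸ h.target.map_mem_zpowers_map_gen hfe y
  have hef : Φ e * f = f := DFunLike.ext _ _ fun y =>
    h.target.map_of_mem_zpowers (zpowers_le.mpr (pow_mem (mem_zpowers c) q) (hmem y))
  have hf : ¬ ∃ g, f * g = Φ e := fun ⟨g, hg⟩ => h.gen_notMem_zpowers_pow <| by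
    have := hmem (g c)
    rwa [← end_mul_apply, hg, h.target.map_gen] at this
  refine mem_center_iff.mpr fun y => ?_
  have hy := DFunLike.congr_fun
    (h.mul_eq_of_not_exists_mul_eq hfe hef hf (h.target.mul_innerEnd y)) c
  rwa [end_mul_apply, hfc, innerEnd_apply, mul_inv_eq_iff_eq_mul] at hy

theorem eq_one_of_map_eq_one_of_pow (h : IsSchmidtTransfer p q v Φ e b c) {u : H}
    (hu : Φ e u = 1) (huq : u ^ q ^ v = 1) : u = 1 := by
  obtain ⟨f, hfe, hfc⟩ :=
    h.target.exists_end_map_gen (h.orderOf_eq ▸ orderOf_dvd_of_pow_eq_one huq)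
  have hef : Φ e * f = trivialEnd H :=
    h.target.end_ext (by rw [mul_assoc, hfe]) rfl (by rw [end_mul_apply, hfc, hu, trivialEnd_apply])
  rw [← hfc, h.eq_trivialEnd hfe hef, trivialEnd_apply]

theorem exists_mem_zpowers_map_innerEnd (h : IsSchmidtTransfer p q v Φ e b c) :
    ∃ y ∈ zpowers b, transportedInnerUnits Φ y = innerUnits H c := by
  have hfix : Φ.symm (innerEnd H c) * e = e :=
    Φ.injective (by rw [map_mul, Φ.apply_symm_apply, h.target.innerEnd_mul])
  have hfixing : Φ.symm (innerEnd H c) ∈ endFixing b := by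
    have := DFunLike.congr_fun hfix b
    rwa [end_mul_apply, h.source.map_gen] at this
  obtain ⟨i, hi⟩ := h.source.exists_eq_innerEnd_pow hfixing
    (by rw [← map_pow, ← map_pow, innerEnd_eq_one_iff.mpr h.gen_pow_mem_center, map_one])
  refine ⟨b ^ i, pow_mem (mem_zpowers b) i, Units.ext ?_⟩
  rw [coe_transportedInnerUnits, map_pow, ← hi, Φ.apply_symm_apply, coe_innerUnits]

theorem range_transportedInnerUnits_le (h : IsSchmidtTransfer p q v Φ e b c) :
    (transportedInnerUnits Φ).range ≤ (innerUnits H).range := by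
  obtain ⟨y, hyb, hy⟩ := h.exists_mem_zpowers_map_innerEnd
  have hbN : b ∈ (innerUnits H).range.comap (transportedInnerUnits Φ) := by
    rcases mem_zpowers_or_mem_zpowers_pow h.source.prime_right h.source.orderOf_eq hyb
      with hby | hyq
    · have hyN : y ∈ (innerUnits H).range.comap (transportedInnerUnits Φ) := ⟨c, hy.symm⟩
      exact zpowers_le.mpr hyN hby
    · have hycenter : y ∈ (transportedInnerUnits Φ).ker :=
        ker_transportedInnerUnits Φ ▸ zpowers_le.mpr h.source.gen_pow_mem_center hyq
      refine absurd ?_ h.gen_notMem_center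
      rw [← ker_innerUnits, MonoidHom.mem_ker, ← hy]
      exact hycenter
  rw [MonoidHom.range_eq_map, map_le_iff_le_comap, h.source.eq_top_of_normal hbN]

theorem range_innerUnits_le (h : IsSchmidtTransfer p q v Φ e b c) :
    (innerUnits H).range ≤ (transportedInnerUnits Φ).range := by
  have hgen : c ∈ (transportedInnerUnits Φ).range.comap (innerUnits H) :=
    have ⟨y, _, hy⟩ := h.exists_mem_zpowers_map_innerEnd
    ⟨y, hy⟩
  have hcomm : commutator H ≤ (transportedInnerUnits Φ).range.comap (innerUnits H) := by
    rw [commutator_eq_closure, closure_le]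
    rintro _ ⟨y, z, rfl⟩
    obtain ⟨g, hg⟩ :=
      h.exists_mul_eq_map_innerEnd_mul (h.target.mul_innerEnd y) (h.target.mul_innerEnd z)
    refine ⟨g, ?_⟩
    have hyz : innerUnits H y * innerUnits H z =
        transportedInnerUnits Φ g * (innerUnits H z * innerUnits H y) := Units.ext hg
    rw [map_commutatorElement, commutatorElement_def, hyz]
    group
  rw [MonoidHom.range_eq_map, map_le_iff_le_comap, ← h.target.ker_sup_zpowers,
    h.ker_eq_commutator]
  exact sup_le hcomm (zpowers_le.mpr hgen)

theorem range_innerUnits_eq (h : IsSchmidtTransfer p q v Φ e b c) :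
    (innerUnits H).range = (transportedInnerUnits Φ).range :=
  h.range_innerUnits_le.antisymm h.range_transportedInnerUnits_le

theorem index_center_eq (h : IsSchmidtTransfer p q v Φ e b c) :
    (center H).index = (center G).index := by
  rw [← ker_innerUnits, ← ker_transportedInnerUnits Φ, index_ker, index_ker, h.range_innerUnits_eq]

theorem isPGroup_commutator (h : IsSchmidtTransfer p q v Φ e b c) : IsPGroup p (commutator H) := by
  have := h.source.finite
  have := h.finiteIndex_center
  have : Fact p.Prime := ⟨h.source.prime_left⟩
  obtain ⟨a, ha⟩ := IsPGroup.iff_card.mp h.source.isPGroup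
  have hdvd : (center H).index ∣ p ^ a * q ^ v := by
    rw [h.index_center_eq, ← ha, ← h.source.card_eq]
    exact index_dvd_card _
  rintro ⟨u, hu⟩
  have hu' : Φ e u = 1 := h.ker_eq_commutator.ge hu
  refine ⟨a, Subtype.ext (h.eq_one_of_map_eq_one_of_pow (u := u ^ p ^ a) ?_ ?_)⟩
  · rw [map_pow, hu', one_pow]
  · rw [← pow_mul]
    exact orderOf_dvd_iff_pow_eq_one.mp <| (orderOf_dvd_of_pow_eq_one
      (h.absorbedByNonunits.pow_index_center_eq_one h.gen_notMem_center hu')).trans hdvd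

theorem map_mem_zpowers_pow_of_mem_center (h : IsSchmidtTransfer p q v Φ e b c) {z : H}
    (hz : z ∈ center H) : Φ e z ∈ zpowers (c ^ q) := by
  refine (mem_zpowers_or_mem_zpowers_pow h.source.prime_right h.orderOf_eq
    (h.target.map_mem z)).resolve_left fun hc => ?_
  obtain ⟨k, hk⟩ := mem_zpowers_iff.mp hc
  have hu : z ^ k * c⁻¹ ∈ commutator H := by
    rw [← h.ker_eq_commutator, ← hk, ← map_zpow]
    exact h.target.map_mul_inv_map _
  have hc' : innerUnits H c ∈ (commutator H).map (innerUnits H) := by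
    have hzk : innerUnits H (z ^ k) = 1 := (ker_innerUnits H).ge (zpow_mem hz k)
    refine ⟨_, inv_mem hu, ?_⟩
    rw [mul_inv_rev, inv_inv, map_mul, map_inv, hzk, inv_one, mul_one]
  refine h.gen_notMem_center ((ker_innerUnits H).le ?_)
  refine eq_one_of_mem_of_pow_eq_one (n := 1) h.source.prime_left h.source.prime_right h.source.ne
    (h.isPGroup_commutator.map (innerUnits H)) hc' ?_
  rw [pow_one, ← map_pow]
  exact (ker_innerUnits H).ge h.gen_pow_mem_center

theorem eq_top_of_sup_center_eq_top (h : IsSchmidtTransfer p q v Φ e b c) {K : Subgroup H}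
    (hK : K ⊔ center H = ⊤) : K = ⊤ := by
  have hker : MonoidHom.ker (Φ e : H →* H) ≤ K :=
    h.ker_eq_commutator ▸ commutator_le_of_sup_center_eq_top hK
  obtain ⟨k, hk, z, hz, hkz⟩ := mem_sup_of_normal_right.mp (hK.ge (mem_top c))
  have hxk : Φ e k ∈ K := by
    have := mul_mem (inv_mem (hker (h.target.map_mul_inv_map k))) hk
    rwa [mul_inv_rev, inv_inv, inv_mul_cancel_right] at this
  have hck : c ∈ zpowers (Φ e k) := by
    refine (mem_zpowers_or_mem_zpowers_pow h.source.prime_right h.orderOf_eq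
      (h.target.map_mem k)).resolve_right fun hxkq => h.gen_notMem_zpowers_pow ?_
    have := mul_mem hxkq (h.map_mem_zpowers_pow_of_mem_center hz)
    rwa [← map_mul, hkz, h.target.map_gen] at this
  exact top_le_iff.mp <| h.target.ker_sup_zpowers ▸
    sup_le hker (zpowers_le.mpr (zpowers_le.mpr hxk hck))

theorem not_isNilpotent (h : IsSchmidtTransfer p q v Φ e b c) : ¬ Group.IsNilpotent H := fun _ =>
  h.source.not_isNilpotent <|
    isNilpotent_of_range_le (ker_transportedInnerUnits Φ).le h.range_transportedInnerUnits_le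

theorem isNilpotent_of_ne_top (h : IsSchmidtTransfer p q v Φ e b c) {K : Subgroup H}
    (hK : K ≠ ⊤) : Group.IsNilpotent K := by
  let L : Subgroup G := (K.map (innerUnits H)).comap (transportedInnerUnits Φ)
  have hL : L ≠ ⊤ := fun htop => hK <| h.eq_top_of_sup_center_eq_top <| top_le_iff.mp fun y _ => by
    obtain ⟨g, hg⟩ := h.range_innerUnits_le ⟨y, rfl⟩
    obtain ⟨k, hk, hkg⟩ : g ∈ L := htop.ge (mem_top g)
    have hcentral : k⁻¹ * y ∈ center H := by
      rw [← ker_innerUnits, MonoidHom.mem_ker, map_mul, map_inv, hkg, hg, inv_mul_cancel]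
    have := mul_mem_sup hk hcentral
    rwa [mul_inv_cancel_left] at this
  have := h.source.isNilpotent_of_ne_top L hL
  refine isNilpotent_of_range_le (f := (transportedInnerUnits Φ).comp L.subtype)
    (g := (innerUnits H).comp K.subtype) (fun k hk => ?_) ?_
  · have hk' : (k : H) ∈ center H := (ker_innerUnits H).le hk
    exact mem_center_iff.mpr fun y => Subtype.ext (mem_center_iff.mp hk' y)
  · rintro _ ⟨k, rfl⟩
    obtain ⟨g, hg⟩ := h.range_innerUnits_le ⟨(k : H), rfl⟩
    exact ⟨⟨g, k, k.2, hg.symm⟩, hg⟩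

theorem isSchmidtGroup (h : IsSchmidtTransfer p q v Φ e b c) : IsSchmidtGroup p q v H :=
  ⟨h.finite, h.not_isNilpotent, fun _ => h.isNilpotent_of_ne_top, h.isPGroup_commutator, c,
    h.orderOf_eq, h.ker_eq_commutator ▸ h.target.ker_sup_zpowers,
    h.ker_eq_commutator ▸ h.target.ker_inf_zpowers⟩

end IsSchmidtTransfer

/-- If `G` is a Schmidt group with parameters `p, q, v` and `H` is any group with
`End(H) ≅ End(G)` as monoids, then `H` is a Schmidt group with the same
parameters. -/
theorem stmt_16 {G H : Type*} [Group G] [Group H]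
    (p q v : ℕ) (hp : p.Prime) (hq : q.Prime) (hpq : p ≠ q) (hv : 1 ≤ v)
    (e : Monoid.End G ≃* Monoid.End H)
    (hG : IsSchmidtGroup p q v G) :
    IsSchmidtGroup p q v H := by
  obtain ⟨r, b, hr⟩ := hG.exists_isSchmidtRetraction hp hq hpq hv
  obtain ⟨c, hc⟩ := hr.exists_isSchmidtTransfer e
  exact hc.isSchmidtGroup
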